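/- There exist a finite alphabet α, a state B ∈ α, and a cellular automaton Φ : α^ℤ → α^ℤ with quiescent state B such that Φ is uniquely ergodic and asymptotically nilpotent in density, but not nilpotent. -/

import Mathlib

open MeasureTheory Filter

/-- The Besicovitch pseudometric on `α^ℤ`:
`d_B(x,y) = limsup_{n→∞} |{i ∈ [-n,n] : x_i ≠ y_i}| / (2n+1)`. -/
noncomputable def besicovitchDist {α : Type} [DecidableEq α] (x y : ℤ → α) : ℝ :=
  Filter.limsup (fun n : ℕ =>
      (((Finset.Icc (-(n : ℤ)) (n : ℤ)).filter fun i => x i ≠ y i).card : ℝ) /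
        (2 * (n : ℝ) + 1))
    Filter.atTop

namespace UE

abbrev Slot := ZMod 7000 × ZMod 49023

inductive Dat where
  | plain (p : Slot)
  | cmp (l : Fin 7) (p : Slot)
  | tau (l : Fin 7) (p : Slot)
  | keep
  | star

inductive UF where
  | id
  | pl
  | keep
  | star
  | inc (l : Fin 7)
  | cmp (l : Fin 7)

/-- displacement of a lane -/
def dl (l : Fin 7) : ℤ := ![0, 1, -1, 7, -7, 7, 0] l

def sh (p : Slot) (d : ℤ) : Slot := (p.1 + (d : ZMod 7000), p.2 + 1)

def UF.app : UF → Dat → Option Dat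
  | .id, m => some m
  | .pl, .plain p => some (.plain p)
  | .keep, .plain _ => some .keep
  | .star, _ => some .star
  | .inc l, .plain p => some (.plain (sh p (dl l)))
  | .cmp l, .plain p => some (.cmp l p)
  | _, _ => none

/-- number of flight steps (of size 7) made by a lane after `j` steps -/
def disp (l : Fin 7) (j : ℕ) : ℤ := max (-(j : ℤ)) (min (j : ℤ) (1000 * dl l))

/-- the zigzag path -/
def zz (j : ℕ) : ℤ :=
  if (j + 6) % 13996 ≤ 6998 then 1 + ((j + 6) % 13996 : ℕ) else 1 + (13996 - ((j + 6) % 13996 : ℕ))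

theorem dl_cases (l : Fin 7) :
    (l = 0 ∧ dl l = 0) ∨ (l = 1 ∧ dl l = 1) ∨ (l = 2 ∧ dl l = -1) ∨ (l = 3 ∧ dl l = 7) ∨
    (l = 4 ∧ dl l = -7) ∨ (l = 5 ∧ dl l = 7) ∨ (l = 6 ∧ dl l = 0) := by
  fin_cases l <;> simp [dl]

theorem dl_bd (l : Fin 7) : -7 ≤ dl l ∧ dl l ≤ 7 := by
  rcases dl_cases l with h | h | h | h | h | h | h <;> omega

/-- Program: unary pushes. -/
def Un (t : ℕ) (o d : ℤ) (u : UF) : Prop :=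
  if t = 0 then (o = 0 ∧ d = 0 ∧ u = .keep) ∨ (o = 0 ∧ d = 1 ∧ u = .pl) ∨
      (o = 7 ∧ d = 0 ∧ u = .id) ∨ (o = 7 ∧ d = 1 ∧ u = .star)
  else if t = 1 then False
  else if t = 2 then u = .id ∧ ((o = 7 ∧ d = 7) ∨ (o = 8 ∧ d = -1))
  else if t < 9 then u = .id ∧ ((7 ≤ o ∧ o ≤ 12) ∨ (14 ≤ o ∧ o ≤ 19)) ∧ (d = 0 ∨ d = 1)
  else if t < 7009 then u = .id ∧ ∃ l : Fin 7,
      (o = 7 + (l : ℕ) + 7 * disp l (t - 9) ∨ o = 14 + (l : ℕ) + 7 * disp l (t - 9)) ∧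
      d = 7 * (disp l (t - 9 + 1) - disp l (t - 9))
  else if t = 7009 then (u = .id ∧ 7 ≤ o ∧ o ≤ 20 ∧ d = 0) ∨
      ∃ l : Fin 7, o = 7 + (l : ℕ) ∧ d = -7 ∧ u = .inc l
  else if t < 7016 then u = .id ∧ ((7 ≤ o ∧ o ≤ 20 ∧ d = 0) ∨ (o = 0 ∧ d = 0) ∨
      (1 ≤ o ∧ o ≤ 6 ∧ d = -1))
  else if t < 7022 then u = .id ∧ ((7 ≤ o ∧ o ≤ 20 ∧ d = 0) ∨
      (0 ≤ o ∧ o ≤ 5 ∧ (d = 0 ∨ d = 1)))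
  else if t = 7022 then (u = .id ∧ ((7 ≤ o ∧ o ≤ 20 ∧ d = 0) ∨ (o = 0 ∧ d = -7))) ∨
      ∃ l : Fin 7, o = (l : ℕ) ∧ d = 0 ∧ u = .cmp l
  else if t = 7023 then u = .id ∧ d = 0 ∧ ((14 ≤ o ∧ o ≤ 20) ∨ o = -7)
  else if t = 7024 then u = .id ∧ d = 0 ∧ o = -7
  else if t = 7025 then u = .id ∧ ((o = 19 ∧ d = -7) ∨
      (d = 0 ∧ 14 ≤ o ∧ o ≤ 20 ∧ o ≠ 19) ∨ (d = 0 ∧ o = -7))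
  else if t = 7026 then u = .id ∧ ((o = 12 ∧ d = 1) ∨
      (d = 0 ∧ 14 ≤ o ∧ o ≤ 20 ∧ o ≠ 19) ∨ (d = 0 ∧ o = -7))
  else if t = 7027 then u = .id ∧ d = 0 ∧ ((14 ≤ o ∧ o ≤ 18) ∨ o = -7)
  else if t < 7034 then u = .id ∧ ((o = -7 ∧ d = 0) ∨ (o = 14 ∧ d = 0) ∨
      (15 ≤ o ∧ o ≤ 20 ∧ d = -1))
  else if t = 7034 then u = .id ∧ ((o = -7 ∧ d = 7) ∨ (o = 14 ∧ d = -7))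
  else u = .id ∧ ((o = 0 ∧ d = 0) ∨ (o = zz (t - 7035) ∧ d = zz (t - 7035 + 1) - zz (t - 7035)))

/-- Program: binary gates (`o` is the right source and the target, `o - 7` the left source). -/
def Bn (t : ℕ) (o : ℤ) : Prop :=
  (t = 1 ∧ (o = 7 ∨ o = 8)) ∨ (t = 7023 ∧ 7 ≤ o ∧ o ≤ 13) ∨ (t = 7024 ∧ 14 ≤ o ∧ o ≤ 20) ∨
  (t = 7027 ∧ o = 20)

def PhiRel (p : Slot) (d : ℤ) (m v : Dat) : Prop :=
  ∃ o u, ((o : ℤ) : ZMod 7000) = p.1 ∧ Un p.2.val o d u ∧ u.app m = some v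

open Classical in
noncomputable def phi (p : Slot) (d : ℤ) (m : Dat) : Option Dat :=
  if h : ∃ v, PhiRel p d m v then some h.choose else none

def BL (p : Slot) : Prop := ∃ o : ℤ, Bn p.2.val o ∧ ((o - 7 : ℤ) : ZMod 7000) = p.1
def BR (p : Slot) : Prop := ∃ o : ℤ, Bn p.2.val o ∧ (o : ZMod 7000) = p.1

open Classical in
noncomputable def Psi (l : Fin 7) (p : Slot) (m : Dat) : Option Dat :=
  if l.val < 5 then phi p (dl l) m
  else if l.val = 5 then (if BL p then some m else none)
  else (if BR p then some m else none)

open Classical in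
noncomputable def G : Dat → Dat → Option Dat
  | .keep, m => some m
  | .plain p, .star => some (.plain p)
  | .cmp l p', .plain p => if sh p (dl l) = p' then some (.tau l p) else none
  | .tau l p, m => Psi l p m
  | _, _ => none

def PR (U : ℤ → ℤ → UF → Prop) (B : ℤ → Prop) (S : ℤ → Dat → Prop) (c : ℤ) (v : Dat) : Prop :=
  (∃ d u o q m, U o d u ∧ c - d = o + 7000 * q ∧ S (c - d) m ∧ u.app m = some v) ∨
  (∃ o q m1 m2, B o ∧ c = o + 7000 * q ∧ S (c - 7) m1 ∧ S c m2 ∧ G m1 m2 = some v)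

theorem PR_mono {U B} {S S' : ℤ → Dat → Prop} (h : ∀ c v, S c v → S' c v) {c v}
    (hp : PR U B S c v) : PR U B S' c v := by
  rcases hp with ⟨d, u, o, q, m, h1, h2, h3, h4⟩ | ⟨o, q, m1, m2, h1, h2, h3, h4, h5⟩
  · exact Or.inl ⟨d, u, o, q, m, h1, h2, h _ _ h3, h4⟩
  · exact Or.inr ⟨o, q, m1, m2, h1, h2, h _ _ h3, h _ _ h4, h5⟩

structure Env where
  PP : ℤ → Dat → Prop
  MM : ℤ → Dat → Prop
  PB : ℤ → Dat → Prop

namespace Env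
variable (E : Env)

def SP (J : ℤ) (v : Dat) : Prop := ∃ p m, v = .plain p ∧ E.PP J (.plain p) ∧ E.MM J m
def SM (J : ℤ) (v : Dat) : Prop := ∃ p, E.PP J (.plain p) ∧ E.MM J v
def IN (l : Fin 7) (J : ℤ) (v : Dat) : Prop :=
  ∃ p, E.SP (J - dl l) (.plain p) ∧ v = .plain (sh p (dl l))
def CM (l : Fin 7) (J : ℤ) (v : Dat) : Prop := ∃ p, E.PB J (.plain p) ∧ v = .cmp l p
def TA (l : Fin 7) (J : ℤ) (v : Dat) : Prop :=
  ∃ p, E.PB J (.plain (sh p (dl l))) ∧ E.SP (J - dl l) (.plain p) ∧ v = .tau l p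
def MF (l : Fin 7) (J : ℤ) (v : Dat) : Prop :=
  ∃ p m, E.PB J (.plain (sh p (dl l))) ∧ E.SP (J - dl l) (.plain p) ∧ E.SM (J - dl l) m ∧
    Psi l p m = some v
def BV (J : ℤ) (v : Dat) : Prop := ∃ v1 v2, E.MF 5 J v1 ∧ E.MF 6 J v2 ∧ G v1 v2 = some v
def FM (l : Fin 7) (J : ℤ) (v : Dat) : Prop := (l.val < 5 ∧ E.MF l J v) ∨ (l = 6 ∧ E.BV J v)

def rows (c : ℤ) (v : Dat) : Prop :=
  ∃ J, ∃ l : Fin 7, (c = 7000 * J + 7 + (l : ℕ) ∧ E.SP (J - dl l) v) ∨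
    (c = 7000 * J + 14 + (l : ℕ) ∧ E.SM (J - dl l) v)
def pbm (c : ℤ) (v : Dat) : Prop := ∃ J, c = 7000 * J - 7 ∧ E.PB J v

def S0 (c : ℤ) (v : Dat) : Prop := ∃ J, (c = 7000 * J ∧ E.PP J v) ∨ (c = 7000 * J + 7 ∧ E.MM J v)
def S1 (c : ℤ) (v : Dat) : Prop := ∃ J, (c = 7000 * J ∧ v = .keep ∧ ∃ p, E.PP J (.plain p)) ∨
  (c = 7000 * J + 1 ∧ ∃ p, v = .plain p ∧ E.PP J v) ∨ (c = 7000 * J + 7 ∧ E.MM J v) ∨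
  (c = 7000 * J + 8 ∧ v = .star ∧ ∃ m, E.MM J m)
def S2 (c : ℤ) (v : Dat) : Prop := ∃ J, (c = 7000 * J + 7 ∧ E.SM J v) ∨ (c = 7000 * J + 8 ∧ E.SP J v)
def Ssp (s : ℕ) (c : ℤ) (v : Dat) : Prop := ∃ J, ∃ i : ℕ, i ≤ s ∧
  ((c = 7000 * J + 7 + i ∧ E.SP J v) ∨ (c = 7000 * J + 14 + i ∧ E.SM J v))
def Sfl (j : ℕ) (c : ℤ) (v : Dat) : Prop := ∃ J, ∃ l : Fin 7,
  (c = 7000 * J + 7 + (l : ℕ) + 7 * disp l j ∧ E.SP J v) ∨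
  (c = 7000 * J + 14 + (l : ℕ) + 7 * disp l j ∧ E.SM J v)
def Sc0 (i : ℕ) (c : ℤ) (v : Dat) : Prop := E.rows c v ∨
  ∃ J, ∃ l : Fin 7, c = 7000 * J + max ((l : ℕ) - (i : ℤ)) 0 ∧ E.IN l J v
def Ss0 (s : ℕ) (c : ℤ) (v : Dat) : Prop := E.rows c v ∨
  ∃ J, ∃ i : ℕ, i ≤ s ∧ c = 7000 * J + i ∧ E.PB J v
def Sa (c : ℤ) (v : Dat) : Prop := E.rows c v ∨ E.pbm c v ∨
  ∃ J, ∃ l : Fin 7, c = 7000 * J + (l : ℕ) ∧ E.CM l J v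
def Sb (c : ℤ) (v : Dat) : Prop := E.pbm c v ∨
  ∃ J, ∃ l : Fin 7, (c = 7000 * J + 7 + (l : ℕ) ∧ E.TA l J v) ∨
    (c = 7000 * J + 14 + (l : ℕ) ∧ E.SM (J - dl l) v)
def Sc (c : ℤ) (v : Dat) : Prop := E.pbm c v ∨
  ∃ J, ∃ l : Fin 7, c = 7000 * J + 14 + (l : ℕ) ∧ E.MF l J v
def Sd (e : ℤ) (c : ℤ) (v : Dat) : Prop := E.pbm c v ∨
  ∃ J, (∃ l : Fin 7, l ≠ 5 ∧ c = 7000 * J + 14 + (l : ℕ) ∧ E.MF l J v) ∨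
    (c = 7000 * J + e ∧ E.MF 5 J v)
def Sc2 (i : ℕ) (c : ℤ) (v : Dat) : Prop := E.pbm c v ∨
  ∃ J, ∃ l : Fin 7, c = 7000 * J + 14 + max ((l : ℕ) - (i : ℤ)) 0 ∧ E.FM l J v
def Sz (j : ℕ) (c : ℤ) (v : Dat) : Prop := ∃ J, (c = 7000 * J ∧ E.PB J v) ∨
  (c = 7000 * J + zz j ∧ ∃ l, E.FM l J v)

/-- expected contents at time `t` -/
def St (t : ℕ) : ℤ → Dat → Prop :=
  if t = 0 then E.S0
  else if t = 1 then E.S1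
  else if t = 2 then E.S2
  else if t < 9 then E.Ssp (t - 3)
  else if t < 7009 then E.Sfl (t - 9)
  else if t = 7009 then E.rows
  else if t < 7016 then E.Sc0 (t - 7010)
  else if t < 7023 then E.Ss0 (t - 7016)
  else if t = 7023 then E.Sa
  else if t = 7024 then E.Sb
  else if t = 7025 then E.Sc
  else if t = 7026 then E.Sd 12
  else if t = 7027 then E.Sd 13
  else if t < 7035 then E.Sc2 (t - 7028)
  else E.Sz (t - 7035)

end Env
end UE

namespace UE

theorem PR_congr {U U' : ℤ → ℤ → UF → Prop} {B B' : ℤ → Prop} {S : ℤ → Dat → Prop}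
    (h : ∀ o d u, U o d u ↔ U' o d u) (h' : ∀ o, B o ↔ B' o) {c v} :
    PR U B S c v ↔ PR U' B' S c v := by
  simp only [PR, h, h']

theorem id_app {u : UF} {m v : Dat} (h : u = .id) (ha : u.app m = some v) : v = m := by
  subst h; simpa [UF.app] using ha.symm

theorem PR_unary {U : ℤ → ℤ → UF → Prop} {B : ℤ → Prop} {S : ℤ → Dat → Prop} {c v}
    (o d q : ℤ) (h : U o d .id) (hc : c - d = o + 7000 * q) (hS : S (c - d) v) : PR U B S c v :=
  Or.inl ⟨d, .id, o, q, v, h, hc, hS, rfl⟩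

namespace Env
variable (E : Env)

theorem st0 (c v) : PR (Un 0) (Bn 0) E.S0 c v ↔ E.S1 c v := by
  constructor
  · rintro (⟨d, u, o, q, m, hU, hc, ⟨J, hS⟩, ha⟩ | ⟨o, q, m1, m2, hB, _⟩)
    · simp only [Un, if_true] at hU
      rcases hU with ⟨rfl, rfl, rfl⟩ | ⟨rfl, rfl, rfl⟩ | ⟨rfl, rfl, rfl⟩ | ⟨rfl, rfl, rfl⟩ <;>
        rcases hS with ⟨h1, h2⟩ | ⟨h1, h2⟩ <;> try omega
      all_goals refine ⟨J, ?_⟩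
      · cases m <;> simp [UF.app] at ha
        exact Or.inl ⟨by omega, ha.symm, _, h2⟩
      · cases m <;> simp [UF.app] at ha
        subst ha
        exact Or.inr (Or.inl ⟨by omega, _, rfl, h2⟩)
      · simp [UF.app] at ha
        subst ha
        exact Or.inr (Or.inr (Or.inl ⟨by omega, h2⟩))
      · cases m <;> simp [UF.app] at ha <;>
        exact Or.inr (Or.inr (Or.inr ⟨by omega, ha.symm, _, h2⟩))
    · simp [Bn] at hB
  · rintro ⟨J, ⟨h, rfl, p, hp⟩ | ⟨h, p, rfl, hp⟩ | ⟨h, hp⟩ | ⟨h, rfl, m, hp⟩⟩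
    · exact Or.inl ⟨0, .keep, 0, J, .plain p, by simp [Un], by omega, ⟨J, Or.inl ⟨by omega, hp⟩⟩, rfl⟩
    · exact Or.inl ⟨1, .pl, 0, J, .plain p, by simp [Un], by omega, ⟨J, Or.inl ⟨by omega, hp⟩⟩, rfl⟩
    · exact Or.inl ⟨0, .id, 7, J, v, by simp [Un], by omega, ⟨J, Or.inr ⟨by omega, hp⟩⟩, rfl⟩
    · exact Or.inl ⟨1, .star, 7, J, m, by simp [Un], by omega, ⟨J, Or.inr ⟨by omega, hp⟩⟩, by cases m <;> rfl⟩

theorem st1 (c v) : PR (Un 1) (Bn 1) E.S1 c v ↔ E.S2 c v := by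
  constructor
  · rintro (⟨d, u, o, q, m, hU, hc, ⟨J, hS⟩, ha⟩ | ⟨o, q, m1, m2, hB, hc, ⟨J, hS⟩, ⟨K, hT⟩, hG⟩)
    · simp [Un] at hU
    · simp only [Bn] at hB
      rcases hB with ⟨-, rfl | rfl⟩ | h | h | h <;> try omega
      all_goals
        rcases hS with ⟨h1, rfl, p, hp⟩ | ⟨h1, p, rfl, hp⟩ | ⟨h1, hp⟩ | ⟨h1, rfl, m, hp⟩ <;>
        rcases hT with ⟨h2, rfl, p', hp'⟩ | ⟨h2, p', rfl, hp'⟩ | ⟨h2, hp'⟩ | ⟨h2, rfl, m', hp'⟩ <;> try omega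
      · obtain rfl : K = J := by omega
        simp [G] at hG; subst hG
        exact ⟨K, Or.inl ⟨by omega, p, hp, hp'⟩⟩
      · obtain rfl : K = J := by omega
        simp [G] at hG; subst hG
        exact ⟨K, Or.inr ⟨by omega, p, _, rfl, hp, hp'⟩⟩
  · rintro ⟨J, ⟨h, p, hp, hm⟩ | ⟨h, p, m, rfl, hp, hm⟩⟩
    · exact Or.inr ⟨7, J, .keep, v, by simp [Bn], by omega, ⟨J, Or.inl ⟨by omega, rfl, p, hp⟩⟩,
        ⟨J, Or.inr (Or.inr (Or.inl ⟨by omega, hm⟩))⟩, rfl⟩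
    · exact Or.inr ⟨8, J, .plain p, .star, by simp [Bn], by omega, ⟨J, Or.inr (Or.inl ⟨by omega, p, rfl, hp⟩)⟩,
        ⟨J, Or.inr (Or.inr (Or.inr ⟨by omega, rfl, m, hm⟩))⟩, rfl⟩

theorem st2 (c v) : PR (Un 2) (Bn 2) E.S2 c v ↔ E.Ssp 0 c v := by
  constructor
  · rintro (⟨d, u, o, q, m, hU, hc, ⟨J, hS⟩, ha⟩ | ⟨o, q, m1, m2, hB, _⟩)
    · simp [Un] at hU
      obtain rfl := id_app hU.1 ha
      refine ⟨J, 0, le_rfl, ?_⟩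
      rcases hU.2 with ⟨rfl, rfl⟩ | ⟨rfl, rfl⟩ <;>
        rcases hS with ⟨h1, h2⟩ | ⟨h1, h2⟩ <;> try omega
      · exact Or.inr ⟨by push_cast; omega, h2⟩
      · exact Or.inl ⟨by push_cast; omega, h2⟩
    · simp [Bn] at hB
  · rintro ⟨J, i, hi, ⟨h, hp⟩ | ⟨h, hp⟩⟩
    · exact PR_unary 8 (-1) J (by simp [Un]) (by omega) ⟨J, Or.inr ⟨by omega, hp⟩⟩
    · exact PR_unary 7 7 J (by simp [Un]) (by omega) ⟨J, Or.inl ⟨by omega, hp⟩⟩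

theorem Un_sp {t} (h : 3 ≤ t) (h' : t < 9) (o d u) : Un t o d u ↔
    u = .id ∧ ((7 ≤ o ∧ o ≤ 12) ∨ (14 ≤ o ∧ o ≤ 19)) ∧ (d = 0 ∨ d = 1) := by
  unfold Un
  rw [if_neg (by omega), if_neg (by omega), if_neg (by omega), if_pos h']

theorem Bn_no {t} {o} (h : t ≠ 1) (h1 : t ≠ 7023) (h2 : t ≠ 7024) (h3 : t ≠ 7027) : ¬ Bn t o := by
  simp [Bn, h, h1, h2, h3]

theorem st3 {t s : ℕ} (h : t = 3 + s) (h' : s < 6) (c v) :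
    PR (Un t) (Bn t) (E.Ssp s) c v ↔ E.Ssp (s+1) c v := by
  constructor
  · rintro (⟨d, u, o, q, m, hU, hc, ⟨J, i, hi, hS⟩, ha⟩ | ⟨o, q, m1, m2, hB, _⟩)
    · rw [Un_sp (by omega) (by omega)] at hU
      obtain rfl := id_app hU.1 ha
      rcases hU.2.2 with rfl | rfl
      · refine ⟨J, i, by omega, ?_⟩
        simpa using hS
      · refine ⟨J, i+1, by omega, ?_⟩
        rcases hS with ⟨h1, h2⟩ | ⟨h1, h2⟩
        · exact Or.inl ⟨by push_cast; omega, h2⟩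
        · exact Or.inr ⟨by push_cast; omega, h2⟩
    · exact absurd hB (Bn_no (by omega) (by omega) (by omega) (by omega))
  · rintro ⟨J, i, hi, hS⟩
    by_cases h0 : i = 0
    · subst h0
      rcases hS with ⟨h1, h2⟩ | ⟨h1, h2⟩
      · exact PR_unary 7 0 J (by rw [Un_sp (by omega) (by omega)]; simp) (by omega) ⟨J, 0, by omega, Or.inl ⟨by omega, h2⟩⟩
      · exact PR_unary 14 0 J (by rw [Un_sp (by omega) (by omega)]; simp) (by omega) ⟨J, 0, by omega, Or.inr ⟨by omega, h2⟩⟩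
    · obtain ⟨k, rfl⟩ : ∃ k, i = k + 1 := ⟨i - 1, by omega⟩
      rcases hS with ⟨h1, h2⟩ | ⟨h1, h2⟩
      · exact PR_unary (7 + k) 1 J (by rw [Un_sp (by omega) (by omega)]; refine ⟨rfl, by omega, by omega⟩) (by omega) ⟨J, k, by omega, Or.inl ⟨by omega, h2⟩⟩
      · exact PR_unary (14 + k) 1 J (by rw [Un_sp (by omega) (by omega)]; refine ⟨rfl, by omega, by omega⟩) (by omega) ⟨J, k, by omega, Or.inr ⟨by omega, h2⟩⟩

theorem sp_fl (c v) : E.Ssp 6 c v ↔ E.Sfl 0 c v := by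
  constructor
  · rintro ⟨J, i, hi, hS⟩
    refine ⟨J, ⟨i, by omega⟩, ?_⟩
    simpa [disp] using hS
  · rintro ⟨J, l, hS⟩
    refine ⟨J, l, by omega, ?_⟩
    simpa [disp] using hS

theorem Un_fl {t j} (h : t = 9 + j) (h' : j < 7000) (o d u) : Un t o d u ↔
    u = .id ∧ ∃ l : Fin 7,
      (o = 7 + (l : ℕ) + 7 * disp l j ∨ o = 14 + (l : ℕ) + 7 * disp l j) ∧
      d = 7 * (disp l (j + 1) - disp l j) := by
  have e : t - 9 = j := by omega
  unfold Un
  rw [if_neg (by omega), if_neg (by omega), if_neg (by omega), if_neg (by omega), if_pos (by omega), e]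

/-- lanes never meet in flight modulo 7000 in rows -/
theorem disp_bd (l : Fin 7) (j : ℕ) (h : j ≤ 7000) : disp l j ≤ j ∧ -(j:ℤ) ≤ disp l j ∧ |disp l j| ≤ 7000 := by
  have := dl_bd l
  unfold disp
  refine ⟨by omega, by omega, ?_⟩
  rw [abs_le]; omega

theorem fl_lane {l l' : Fin 7} {a b J q : ℤ} 
    (h : 7 * a + (l : ℕ) = 7 * b + (l' : ℕ)) : l = l' ∧ a = b := by
  have := l.2; have := l'.2
  refine ⟨Fin.ext (by omega), by omega⟩

theorem st4 {t j : ℕ} (h : t = 9 + j) (h' : j < 7000) (c v) :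
    PR (Un t) (Bn t) (E.Sfl j) c v ↔ E.Sfl (j+1) c v := by
  constructor
  · rintro (⟨d, u, o, q, m, hU, hc, ⟨J, l', hS⟩, ha⟩ | ⟨o, q, m1, m2, hB, _⟩)
    · rw [Un_fl h h'] at hU
      obtain ⟨hu, l, ho, hd⟩ := hU
      obtain rfl := id_app hu ha
      have hl := l.2
      have hl' := l'.2
      obtain rfl : l = l' := by
        apply Fin.ext
        rcases hS with ⟨h1, h2⟩ | ⟨h1, h2⟩ <;> rcases ho with rfl | rfl <;> omega
      refine ⟨J, l, ?_⟩
      rcases hS with ⟨h1, h2⟩ | ⟨h1, h2⟩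
      · exact Or.inl ⟨by omega, h2⟩
      · exact Or.inr ⟨by omega, h2⟩
    · exact absurd hB (Bn_no (by omega) (by omega) (by omega) (by omega))
  · rintro ⟨J, l, ⟨h1, h2⟩ | ⟨h1, h2⟩⟩
    · exact PR_unary (7 + (l : ℕ) + 7 * disp l j) (7 * (disp l (j + 1) - disp l j)) J
        (by rw [Un_fl h h']; exact ⟨rfl, l, Or.inl rfl, rfl⟩) (by omega) ⟨J, l, Or.inl ⟨by omega, h2⟩⟩
    · exact PR_unary (14 + (l : ℕ) + 7 * disp l j) (7 * (disp l (j + 1) - disp l j)) J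
        (by rw [Un_fl h h']; exact ⟨rfl, l, Or.inr rfl, rfl⟩) (by omega) ⟨J, l, Or.inr ⟨by omega, h2⟩⟩

theorem disp_end (l : Fin 7) : disp l 7000 = 1000 * dl l := by
  have := dl_bd l
  unfold disp; push_cast; omega

theorem fl_rows (c v) : E.Sfl 7000 c v ↔ E.rows c v := by
  constructor
  · rintro ⟨J, l, hS⟩
    refine ⟨J + dl l, l, ?_⟩
    rw [add_sub_cancel_right]
    rw [disp_end] at hS
    rcases hS with ⟨h1, h2⟩ | ⟨h1, h2⟩
    · exact Or.inl ⟨by omega, h2⟩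
    · exact Or.inr ⟨by omega, h2⟩
  · rintro ⟨J, l, hS⟩
    refine ⟨J - dl l, l, ?_⟩
    rw [disp_end]
    rcases hS with ⟨h1, h2⟩ | ⟨h1, h2⟩
    · exact Or.inl ⟨by omega, h2⟩
    · exact Or.inr ⟨by omega, h2⟩

end Env
end UE

namespace UE
namespace Env
variable (E : Env)

variable {E} in
theorem rows_bd {c v} (h : E.rows c v) : ∃ J, 7000 * J + 7 ≤ c ∧ c ≤ 7000 * J + 20 := by
  obtain ⟨J, l, h | h⟩ := h
  · exact ⟨J, by omega, by omega⟩
  · exact ⟨J, by omega, by omega⟩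

variable {E} in
theorem rows_keep {U : ℤ → ℤ → UF → Prop} {B S} (hU : ∀ o, 7 ≤ o → o ≤ 20 → U o 0 .id)
    (hS : ∀ c v, E.rows c v → S c v) {c v} (h : E.rows c v) : PR U B S c v := by
  obtain ⟨J, h1, h2⟩ := rows_bd h
  exact PR_unary (c - 7000 * J) 0 J (hU _ (by omega) (by omega)) (by omega) (by simpa using hS _ _ h)

theorem SP_plain {J v} (h : E.SP J v) : ∃ p, v = .plain p := by
  obtain ⟨p, m, rfl, _⟩ := h; exact ⟨p, rfl⟩

theorem st5 (c v) : PR (Un 7009) (Bn 7009) E.rows c v ↔ E.Sc0 0 c v := by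
  have hU : ∀ o d u, Un 7009 o d u ↔ ((u = .id ∧ 7 ≤ o ∧ o ≤ 20 ∧ d = 0) ∨
      ∃ l : Fin 7, o = 7 + (l : ℕ) ∧ d = -7 ∧ u = .inc l) := by
    intro o d u; unfold Un; simp
  constructor
  · rintro (⟨d, u, o, q, m, hu, hc, hS, ha⟩ | ⟨o, q, m1, m2, hB, _⟩)
    · rw [hU] at hu
      rcases hu with ⟨hu, h1, h2, rfl⟩ | ⟨l, rfl, rfl, rfl⟩
      · obtain rfl := id_app hu ha
        left; simpa using hS
      · right
        obtain ⟨J, l', ⟨h1, h2⟩ | ⟨h1, h2⟩⟩ := hS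
        · obtain rfl : l = l' := Fin.ext (by omega)
          obtain ⟨p, rfl⟩ := E.SP_plain h2
          simp [UF.app] at ha
          exact ⟨J, l, by omega, p, h2, ha.symm⟩
        · omega
    · exact absurd hB (Bn_no (by omega) (by omega) (by omega) (by omega))
  · rintro (h | ⟨J, l, hc, p, hp, rfl⟩)
    · exact rows_keep (fun o h1 h2 => (hU _ _ _).2 (Or.inl ⟨rfl, h1, h2, rfl⟩)) (fun _ _ h => h) h
    · exact Or.inl ⟨-7, .inc l, 7 + (l : ℕ), J, .plain p, (hU _ _ _).2 (Or.inr ⟨l, rfl, rfl, rfl⟩),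
        by omega, ⟨J, l, Or.inl ⟨by omega, hp⟩⟩, rfl⟩

theorem Un_c0 {t} (h : 7010 ≤ t) (h' : t < 7016) (o d u) : Un t o d u ↔
    u = .id ∧ ((7 ≤ o ∧ o ≤ 20 ∧ d = 0) ∨ (o = 0 ∧ d = 0) ∨ (1 ≤ o ∧ o ≤ 6 ∧ d = -1)) := by
  unfold Un
  rw [if_neg (by omega), if_neg (by omega), if_neg (by omega), if_neg (by omega), if_neg (by omega),
    if_neg (by omega), if_pos (by omega)]

theorem st6 {t i : ℕ} (h : t = 7010 + i) (h' : i < 6) (c v) :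
    PR (Un t) (Bn t) (E.Sc0 i) c v ↔ E.Sc0 (i+1) c v := by
  have hU := Un_c0 (t := t) (by omega) (by omega)
  constructor
  · rintro (⟨d, u, o, q, m, hu, hc, hS, ha⟩ | ⟨o, q, m1, m2, hB, _⟩)
    · rw [hU] at hu
      obtain ⟨hu, hod⟩ := hu
      obtain rfl := id_app hu ha
      rcases hS with hS | ⟨J, l, h1, h2⟩
      · left
        obtain ⟨J, h1, h2⟩ := rows_bd hS
        obtain rfl : d = 0 := by omega
        simpa using hS
      · right
        refine ⟨J, l, ?_, h2⟩
        push_cast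
        omega
    · exact absurd hB (Bn_no (by omega) (by omega) (by omega) (by omega))
  · rintro (h | ⟨J, l, hc, h2⟩)
    · exact rows_keep (fun o h1 h2 => (hU _ _ _).2 ⟨rfl, by omega⟩) (fun _ _ h => Or.inl h) h
    · push_cast at hc
      by_cases h0 : (l : ℕ) ≤ i
      · exact PR_unary 0 0 J ((hU _ _ _).2 ⟨rfl, by omega⟩) (by omega) (Or.inr ⟨J, l, by omega, h2⟩)
      · exact PR_unary ((l : ℕ) - i) (-1) J ((hU _ _ _).2 ⟨rfl, by omega⟩) (by omega) (Or.inr ⟨J, l, by omega, h2⟩)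

theorem Un_s0 {t} (h : 7016 ≤ t) (h' : t < 7022) (o d u) : Un t o d u ↔
    u = .id ∧ ((7 ≤ o ∧ o ≤ 20 ∧ d = 0) ∨ (0 ≤ o ∧ o ≤ 5 ∧ (d = 0 ∨ d = 1))) := by
  unfold Un
  rw [if_neg (by omega), if_neg (by omega), if_neg (by omega), if_neg (by omega), if_neg (by omega),
    if_neg (by omega), if_neg (by omega), if_pos (by omega)]

theorem c0_s0 {E' : Env} (h1 : E'.PP = E.PP) (h2 : E'.MM = E.MM)
    (h3 : ∀ J v, E'.PB J v ↔ ∃ l, E.IN l J v) (c v) : E.Sc0 6 c v ↔ E'.Ss0 0 c v := by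
  have hr : E'.rows c v ↔ E.rows c v := by
    simp only [rows, SP, SM, h1, h2]
  unfold Sc0 Ss0
  rw [hr]
  refine or_congr Iff.rfl ⟨?_, ?_⟩
  · rintro ⟨J, l, hc, h⟩
    exact ⟨J, 0, le_rfl, by push_cast at *; omega, (h3 _ _).2 ⟨l, h⟩⟩
  · rintro ⟨J, i, hi, hc, h⟩
    obtain ⟨l, h⟩ := (h3 _ _).1 h
    exact ⟨J, l, by push_cast at *; omega, h⟩

theorem st7 {t i : ℕ} (h : t = 7016 + i) (h' : i < 6) (c v) :
    PR (Un t) (Bn t) (E.Ss0 i) c v ↔ E.Ss0 (i+1) c v := by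
  have hU := Un_s0 (t := t) (by omega) (by omega)
  constructor
  · rintro (⟨d, u, o, q, m, hu, hc, hS, ha⟩ | ⟨o, q, m1, m2, hB, _⟩)
    · rw [hU] at hu
      obtain ⟨hu, hod⟩ := hu
      obtain rfl := id_app hu ha
      rcases hS with hS | ⟨J, l, hl, h1, h2⟩
      · left
        obtain ⟨J, h1, h2⟩ := rows_bd hS
        obtain rfl : d = 0 := by omega
        simpa using hS
      · right
        by_cases hd : d = 0
        · exact ⟨J, l, by omega, by omega, h2⟩
        · exact ⟨J, l + 1, by omega, by omega, h2⟩
    · exact absurd hB (Bn_no (by omega) (by omega) (by omega) (by omega))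
  · rintro (h | ⟨J, l, hl, hc, h2⟩)
    · exact rows_keep (fun o h1 h2 => (hU _ _ _).2 ⟨rfl, by omega⟩) (fun _ _ h => Or.inl h) h
    · by_cases h0 : l = 0
      · exact PR_unary 0 0 J ((hU _ _ _).2 ⟨rfl, by omega⟩) (by omega) (Or.inr ⟨J, l, by omega, by omega, h2⟩)
      · exact PR_unary (l - 1) 1 J ((hU _ _ _).2 ⟨rfl, by omega⟩) (by omega) (Or.inr ⟨J, l - 1, by omega, by omega, h2⟩)

theorem Un_a (o d u) : Un 7022 o d u ↔
    (u = .id ∧ ((7 ≤ o ∧ o ≤ 20 ∧ d = 0) ∨ (o = 0 ∧ d = -7))) ∨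
      ∃ l : Fin 7, o = (l : ℕ) ∧ d = 0 ∧ u = .cmp l := by
  unfold Un; simp

/-- `PB` consists of plain values -/
def Pl : Prop := ∀ J v, E.PB J v → ∃ p, v = .plain p

theorem st8 (hP : E.Pl) (c v) : PR (Un 7022) (Bn 7022) (E.Ss0 6) c v ↔ E.Sa c v := by
  constructor
  · rintro (⟨d, u, o, q, m, hu, hc, hS, ha⟩ | ⟨o, q, m1, m2, hB, _⟩)
    · rw [Un_a] at hu
      rcases hu with ⟨hu, hod⟩ | ⟨l, rfl, rfl, rfl⟩
      · obtain rfl := id_app hu ha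
        rcases hS with hS | ⟨J, l, hl, h1, h2⟩
        · left
          obtain ⟨J, h1, h2⟩ := rows_bd hS
          obtain rfl : d = 0 := by omega
          simpa using hS
        · right; left
          exact ⟨J, by omega, h2⟩
      · rcases hS with hS | ⟨J, i, hl, h1, h2⟩
        · obtain ⟨J, h1, h2⟩ := rows_bd hS
          omega
        · right; right
          obtain ⟨p, rfl⟩ := hP _ _ h2
          simp [UF.app] at ha
          exact ⟨J, l, by omega, p, h2, ha.symm⟩
    · exact absurd hB (Bn_no (by omega) (by omega) (by omega) (by omega))
  · rintro (h | ⟨J, hc, h2⟩ | ⟨J, l, hc, p, h2, rfl⟩)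
    · exact rows_keep (fun o h1 h2 => (Un_a _ _ _).2 (Or.inl ⟨rfl, by omega⟩)) (fun _ _ h => Or.inl h) h
    · exact PR_unary 0 (-7) J ((Un_a _ _ _).2 (Or.inl ⟨rfl, by omega⟩)) (by omega) (Or.inr ⟨J, 0, by omega, by omega, h2⟩)
    · exact Or.inl ⟨0, .cmp l, (l : ℕ), J, .plain p, (Un_a _ _ _).2 (Or.inr ⟨l, rfl, rfl, rfl⟩),
        by omega, Or.inr ⟨J, l, by omega, by omega, h2⟩, rfl⟩

theorem Un_b (o d u) : Un 7023 o d u ↔ u = .id ∧ d = 0 ∧ ((14 ≤ o ∧ o ≤ 20) ∨ o = -7) := by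
  unfold Un; simp

theorem st9 (hP : E.Pl) (c v) : PR (Un 7023) (Bn 7023) E.Sa c v ↔ E.Sb c v := by
  constructor
  · rintro (⟨d, u, o, q, m, hu, hc, hS, ha⟩ | ⟨o, q, m1, m2, hB, hc, hS, hT, hG⟩)
    · rw [Un_b] at hu
      obtain ⟨hu, rfl, ho⟩ := hu
      obtain rfl := id_app hu ha
      rw [sub_zero] at hS hc
      rcases hS with ⟨J, l, ⟨h1, h2⟩ | ⟨h1, h2⟩⟩ | h | ⟨J, l, h1, h2⟩
      · omega
      · exact Or.inr ⟨J, l, Or.inr ⟨h1, h2⟩⟩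
      · exact Or.inl h
      · omega
    · have ho : 7 ≤ o ∧ o ≤ 13 := by simp only [Bn] at hB; omega
      rcases hS with ⟨J, l, h1⟩ | ⟨J, h1, h2⟩ | ⟨J, l, h1, p, h2, rfl⟩
      · omega
      · omega
      · rcases hT with ⟨J', l', ⟨h1', h2'⟩ | ⟨h1', h2'⟩⟩ | ⟨J', h1', h2'⟩ | ⟨J', l', h1', h2'⟩ <;> try omega
        obtain rfl : l = l' := Fin.ext (by omega)
        obtain rfl : J = J' := by omega
        obtain ⟨p', rfl⟩ := E.SP_plain h2'
        simp only [G] at hG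
        split_ifs at hG with hs
        subst hs
        simp at hG
        exact Or.inr ⟨J, l, Or.inl ⟨h1', p', h2, h2', hG.symm⟩⟩
  · rintro (⟨J, hc, h2⟩ | ⟨J, l, ⟨hc, p, h2, h3, rfl⟩ | ⟨hc, h2⟩⟩)
    · exact PR_unary (-7) 0 J ((Un_b _ _ _).2 ⟨rfl, by omega⟩) (by omega) (Or.inr (Or.inl ⟨J, by omega, h2⟩))
    · refine Or.inr ⟨7 + (l : ℕ), J, .cmp l (sh p (dl l)), .plain p, by have := l.2; refine Or.inr ?_; norm_num [Bn]; omega, by omega,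
        Or.inr (Or.inr ⟨J, l, by omega, _, h2, rfl⟩), Or.inl ⟨J, l, Or.inl ⟨by omega, h3⟩⟩, by simp [G]⟩
    · exact PR_unary (14 + (l : ℕ)) 0 J ((Un_b _ _ _).2 ⟨rfl, by omega⟩) (by omega) (Or.inl ⟨J, l, Or.inr ⟨by omega, h2⟩⟩)

theorem Un_c (o d u) : Un 7024 o d u ↔ u = .id ∧ d = 0 ∧ o = -7 := by
  unfold Un; simp

theorem st10 (c v) : PR (Un 7024) (Bn 7024) E.Sb c v ↔ E.Sc c v := by
  constructor
  · rintro (⟨d, u, o, q, m, hu, hc, hS, ha⟩ | ⟨o, q, m1, m2, hB, hc, hS, hT, hG⟩)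
    · rw [Un_c] at hu
      obtain ⟨hu, rfl, ho⟩ := hu
      obtain rfl := id_app hu ha
      rw [sub_zero] at hS hc
      rcases hS with h | ⟨J, l, h⟩
      · exact Or.inl h
      · omega
    · have ho : 14 ≤ o ∧ o ≤ 20 := by simp only [Bn] at hB; omega
      rcases hS with ⟨J, h1, h2⟩ | ⟨J, l, ⟨h1, p, h2, h3, rfl⟩ | ⟨h1, h2⟩⟩ <;> try omega
      rcases hT with ⟨J', h1', h2'⟩ | ⟨J', l', ⟨h1', h2'⟩ | ⟨h1', h2'⟩⟩ <;> try omega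
      obtain rfl : l = l' := Fin.ext (by omega)
      obtain rfl : J = J' := by omega
      exact Or.inr ⟨J, l, h1', p, _, h2, h3, h2', hG⟩
  · rintro (⟨J, hc, h2⟩ | ⟨J, l, hc, p, m, h2, h3, h4, h5⟩)
    · exact PR_unary (-7) 0 J ((Un_c _ _ _).2 ⟨rfl, by omega⟩) (by omega) (Or.inl ⟨J, by omega, h2⟩)
    · exact Or.inr ⟨14 + (l : ℕ), J, .tau l p, m, by have := l.2; refine Or.inr ?_; norm_num [Bn]; omega, by omega,
        Or.inr ⟨J, l, Or.inl ⟨by omega, p, h2, h3, rfl⟩⟩, Or.inr ⟨J, l, Or.inr ⟨by omega, h4⟩⟩, h5⟩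

theorem Un_d (o d u) : Un 7025 o d u ↔ u = .id ∧ ((o = 19 ∧ d = -7) ∨
      (d = 0 ∧ 14 ≤ o ∧ o ≤ 20 ∧ o ≠ 19) ∨ (d = 0 ∧ o = -7)) := by
  unfold Un; simp

theorem st11 (c v) : PR (Un 7025) (Bn 7025) E.Sc c v ↔ E.Sd 12 c v := by
  constructor
  · rintro (⟨d, u, o, q, m, hu, hc, hS, ha⟩ | ⟨o, q, m1, m2, hB, _⟩)
    · rw [Un_d] at hu
      obtain ⟨hu, hod⟩ := hu
      obtain rfl := id_app hu ha
      rcases hS with ⟨J, h1, h2⟩ | ⟨J, l, h1, h2⟩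
      · exact Or.inl ⟨J, by omega, h2⟩
      · right
        by_cases hl : l = 5
        · subst hl
          simp at h1
          exact ⟨J, Or.inr ⟨by omega, h2⟩⟩
        · have : (l : ℕ) ≠ 5 := fun h => hl (Fin.ext h)
          exact ⟨J, Or.inl ⟨l, hl, by omega, h2⟩⟩
    · exact absurd hB (Bn_no (by omega) (by omega) (by omega) (by omega))
  · rintro (⟨J, hc, h2⟩ | ⟨J, ⟨l, hl, hc, h2⟩ | ⟨hc, h2⟩⟩)
    · exact PR_unary (-7) 0 J ((Un_d _ _ _).2 ⟨rfl, by omega⟩) (by omega) (Or.inl ⟨J, by omega, h2⟩)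
    · have : (l : ℕ) ≠ 5 := fun h => hl (Fin.ext h)
      exact PR_unary (14 + (l : ℕ)) 0 J ((Un_d _ _ _).2 ⟨rfl, by omega⟩) (by omega) (Or.inr ⟨J, l, by omega, h2⟩)
    · exact PR_unary 19 (-7) J ((Un_d _ _ _).2 ⟨rfl, by omega⟩) (by omega) (Or.inr ⟨J, 5, by simp; omega, h2⟩)

theorem Un_e (o d u) : Un 7026 o d u ↔ u = .id ∧ ((o = 12 ∧ d = 1) ∨
      (d = 0 ∧ 14 ≤ o ∧ o ≤ 20 ∧ o ≠ 19) ∨ (d = 0 ∧ o = -7)) := by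
  unfold Un; simp

theorem st12 (c v) : PR (Un 7026) (Bn 7026) (E.Sd 12) c v ↔ E.Sd 13 c v := by
  constructor
  · rintro (⟨d, u, o, q, m, hu, hc, hS, ha⟩ | ⟨o, q, m1, m2, hB, _⟩)
    · rw [Un_e] at hu
      obtain ⟨hu, hod⟩ := hu
      obtain rfl := id_app hu ha
      rcases hS with ⟨J, h1, h2⟩ | ⟨J, ⟨l, hl, h1, h2⟩ | ⟨h1, h2⟩⟩
      · exact Or.inl ⟨J, by omega, h2⟩
      · exact Or.inr ⟨J, Or.inl ⟨l, hl, by omega, h2⟩⟩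
      · exact Or.inr ⟨J, Or.inr ⟨by omega, h2⟩⟩
    · exact absurd hB (Bn_no (by omega) (by omega) (by omega) (by omega))
  · rintro (⟨J, hc, h2⟩ | ⟨J, ⟨l, hl, hc, h2⟩ | ⟨hc, h2⟩⟩)
    · exact PR_unary (-7) 0 J ((Un_e _ _ _).2 ⟨rfl, by omega⟩) (by omega) (Or.inl ⟨J, by omega, h2⟩)
    · have : (l : ℕ) ≠ 5 := fun h => hl (Fin.ext h)
      exact PR_unary (14 + (l : ℕ)) 0 J ((Un_e _ _ _).2 ⟨rfl, by omega⟩) (by omega) (Or.inr ⟨J, Or.inl ⟨l, hl, by omega, h2⟩⟩)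
    · exact PR_unary 12 1 J ((Un_e _ _ _).2 ⟨rfl, by omega⟩) (by omega) (Or.inr ⟨J, Or.inr ⟨by omega, h2⟩⟩)

theorem Un_f (o d u) : Un 7027 o d u ↔ u = .id ∧ d = 0 ∧ ((14 ≤ o ∧ o ≤ 18) ∨ o = -7) := by
  unfold Un; simp

theorem st13 (c v) : PR (Un 7027) (Bn 7027) (E.Sd 13) c v ↔ E.Sc2 0 c v := by
  constructor
  · rintro (⟨d, u, o, q, m, hu, hc, hS, ha⟩ | ⟨o, q, m1, m2, hB, hc, hS, hT, hG⟩)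
    · rw [Un_f] at hu
      obtain ⟨hu, rfl, ho⟩ := hu
      obtain rfl := id_app hu ha
      rw [sub_zero] at hS hc
      rcases hS with h | ⟨J, ⟨l, hl, h1, h2⟩ | ⟨h1, h2⟩⟩
      · exact Or.inl h
      · exact Or.inr ⟨J, l, by omega, Or.inl ⟨by omega, h2⟩⟩
      · omega
    · have ho : o = 20 := by simp only [Bn] at hB; omega
      rcases hS with ⟨J, h1, h2⟩ | ⟨J, ⟨l, hl, h1, h2⟩ | ⟨h1, h2⟩⟩ <;> try omega
      rcases hT with ⟨J', h1', h2'⟩ | ⟨J', ⟨l', hl', h1', h2'⟩ | ⟨h1', h2'⟩⟩ <;> try omega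
      obtain rfl : l' = 6 := Fin.ext (by simp; omega)
      obtain rfl : J = J' := by simp at h1'; omega
      exact Or.inr ⟨J, 6, by simp at *; omega, Or.inr ⟨rfl, _, _, h2, h2', hG⟩⟩
  · rintro (⟨J, hc, h2⟩ | ⟨J, l, hc, ⟨hl, h2⟩ | ⟨rfl, v1, v2, h2, h3, h4⟩⟩)
    · exact PR_unary (-7) 0 J ((Un_f _ _ _).2 ⟨rfl, by omega⟩) (by omega) (Or.inl ⟨J, by omega, h2⟩)
    · exact PR_unary (14 + (l : ℕ)) 0 J ((Un_f _ _ _).2 ⟨rfl, by omega⟩) (by omega)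
        (Or.inr ⟨J, Or.inl ⟨l, by rintro rfl; simp at hl, by omega, h2⟩⟩)
    · simp at hc
      exact Or.inr ⟨20, J, v1, v2, by simp [Bn], by omega, Or.inr ⟨J, Or.inr ⟨by omega, h2⟩⟩,
        Or.inr ⟨J, Or.inl ⟨6, by decide, by simp; omega, h3⟩⟩, h4⟩

theorem Un_c2 {t} (h : 7028 ≤ t) (h' : t < 7034) (o d u) : Un t o d u ↔
    u = .id ∧ ((o = -7 ∧ d = 0) ∨ (o = 14 ∧ d = 0) ∨ (15 ≤ o ∧ o ≤ 20 ∧ d = -1)) := by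
  unfold Un
  iterate 14 rw [if_neg (by omega)]
  rw [if_pos h']

theorem st14 {t i : ℕ} (h : t = 7028 + i) (h' : i < 6) (c v) :
    PR (Un t) (Bn t) (E.Sc2 i) c v ↔ E.Sc2 (i+1) c v := by
  have hU := Un_c2 (t := t) (by omega) (by omega)
  constructor
  · rintro (⟨d, u, o, q, m, hu, hc, hS, ha⟩ | ⟨o, q, m1, m2, hB, _⟩)
    · rw [hU] at hu
      obtain ⟨hu, hod⟩ := hu
      obtain rfl := id_app hu ha
      rcases hS with ⟨J, h1, h2⟩ | ⟨J, l, h1, h2⟩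
      · exact Or.inl ⟨J, by omega, h2⟩
      · right
        refine ⟨J, l, ?_, h2⟩
        push_cast
        omega
    · exact absurd hB (Bn_no (by omega) (by omega) (by omega) (by omega))
  · rintro (⟨J, hc, h2⟩ | ⟨J, l, hc, h2⟩)
    · exact PR_unary (-7) 0 J ((hU _ _ _).2 ⟨rfl, by omega⟩) (by omega) (Or.inl ⟨J, by omega, h2⟩)
    · push_cast at hc
      by_cases h0 : (l : ℕ) ≤ i
      · exact PR_unary 14 0 J ((hU _ _ _).2 ⟨rfl, by omega⟩) (by omega) (Or.inr ⟨J, l, by omega, h2⟩)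
      · exact PR_unary (14 + ((l : ℕ) - i)) (-1) J ((hU _ _ _).2 ⟨rfl, by omega⟩) (by omega) (Or.inr ⟨J, l, by omega, h2⟩)

theorem Un_g (o d u) : Un 7034 o d u ↔ u = .id ∧ ((o = -7 ∧ d = 7) ∨ (o = 14 ∧ d = -7)) := by
  unfold Un; simp

theorem st15 (c v) : PR (Un 7034) (Bn 7034) (E.Sc2 6) c v ↔ E.Sz 0 c v := by
  have hz : zz 0 = 7 := by simp [zz]
  constructor
  · rintro (⟨d, u, o, q, m, hu, hc, hS, ha⟩ | ⟨o, q, m1, m2, hB, _⟩)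
    · rw [Un_g] at hu
      obtain ⟨hu, hod⟩ := hu
      obtain rfl := id_app hu ha
      rcases hS with ⟨J, h1, h2⟩ | ⟨J, l, h1, h2⟩
      · exact ⟨J, Or.inl ⟨by omega, h2⟩⟩
      · exact ⟨J, Or.inr ⟨by omega, l, h2⟩⟩
    · exact absurd hB (Bn_no (by omega) (by omega) (by omega) (by omega))
  · rintro ⟨J, ⟨hc, h2⟩ | ⟨hc, l, h2⟩⟩
    · exact PR_unary (-7) 7 J ((Un_g _ _ _).2 ⟨rfl, by omega⟩) (by omega) (Or.inl ⟨J, by omega, h2⟩)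
    · exact PR_unary 14 (-7) J ((Un_g _ _ _).2 ⟨rfl, by omega⟩) (by omega) (Or.inr ⟨J, l, by omega, h2⟩)

theorem Un_z {t j} (h : t = 7035 + j) (o d u) : Un t o d u ↔
    u = .id ∧ ((o = 0 ∧ d = 0) ∨ (o = zz j ∧ d = zz (j + 1) - zz j)) := by
  have e : t - 7035 = j := by omega
  unfold Un
  iterate 16 rw [if_neg (by omega)]
  rw [e]

theorem zz_bd (j) : 1 ≤ zz j ∧ zz j ≤ 6999 := by
  unfold zz; split_ifs <;> omega

theorem zz_step (j) : zz (j+1) - zz j = 1 ∨ zz (j+1) - zz j = -1 := by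
  unfold zz; split_ifs <;> omega

theorem st16 {t j : ℕ} (h : t = 7035 + j) (c v) :
    PR (Un t) (Bn t) (E.Sz j) c v ↔ E.Sz (j+1) c v := by
  have hz := zz_bd j
  constructor
  · rintro (⟨d, u, o, q, m, hu, hc, hS, ha⟩ | ⟨o, q, m1, m2, hB, _⟩)
    · rw [Un_z h] at hu
      obtain ⟨hu, hod⟩ := hu
      obtain rfl := id_app hu ha
      rcases hS with ⟨J, ⟨h1, h2⟩ | ⟨h1, h2⟩⟩
      · exact ⟨J, Or.inl ⟨by omega, h2⟩⟩
      · exact ⟨J, Or.inr ⟨by omega, h2⟩⟩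
    · exact absurd hB (Bn_no (by omega) (by omega) (by omega) (by omega))
  · rintro ⟨J, ⟨hc, h2⟩ | ⟨hc, h2⟩⟩
    · exact PR_unary 0 0 J ((Un_z h _ _ _).2 ⟨rfl, by omega⟩) (by omega) ⟨J, Or.inl ⟨by omega, h2⟩⟩
    · exact PR_unary (zz j) (zz (j+1) - zz j) J ((Un_z h _ _ _).2 ⟨rfl, by omega⟩) (by omega) ⟨J, Or.inr ⟨by omega, h2⟩⟩

end Env
end UE

namespace UE
namespace Env
variable (E : Env)

theorem St_0 : E.St 0 = E.S0 := by unfold St; simp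
theorem St_1 : E.St 1 = E.S1 := by unfold St; simp
theorem St_2 : E.St 2 = E.S2 := by unfold St; simp
theorem St_sp {t} (h : 3 ≤ t) (h' : t < 9) : E.St t = E.Ssp (t - 3) := by
  unfold St; iterate 3 rw [if_neg (by omega)]
  rw [if_pos h']
theorem St_fl {t} (h : 9 ≤ t) (h' : t < 7009) : E.St t = E.Sfl (t - 9) := by
  unfold St; iterate 4 rw [if_neg (by omega)]
  rw [if_pos h']
theorem St_rows : E.St 7009 = E.rows := by unfold St; simp
theorem St_c0 {t} (h : 7010 ≤ t) (h' : t < 7016) : E.St t = E.Sc0 (t - 7010) := by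
  unfold St; iterate 6 rw [if_neg (by omega)]
  rw [if_pos h']
theorem St_s0 {t} (h : 7016 ≤ t) (h' : t < 7023) : E.St t = E.Ss0 (t - 7016) := by
  unfold St; iterate 7 rw [if_neg (by omega)]
  rw [if_pos h']
theorem St_a : E.St 7023 = E.Sa := by unfold St; simp
theorem St_b : E.St 7024 = E.Sb := by unfold St; simp
theorem St_c : E.St 7025 = E.Sc := by unfold St; simp
theorem St_d : E.St 7026 = E.Sd 12 := by unfold St; simp
theorem St_e : E.St 7027 = E.Sd 13 := by unfold St; simp
theorem St_c2 {t} (h : 7028 ≤ t) (h' : t < 7035) : E.St t = E.Sc2 (t - 7028) := by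
  unfold St; iterate 13 rw [if_neg (by omega)]
  rw [if_pos h']
theorem St_z {t} (h : 7035 ≤ t) : E.St t = E.Sz (t - 7035) := by
  unfold St; iterate 14 rw [if_neg (by omega)]

theorem sp_fl' : E.Ssp 6 = E.Sfl 0 := by ext c v; exact E.sp_fl c v
theorem fl_rows' : E.Sfl 7000 = E.rows := by ext c v; exact E.fl_rows c v

theorem St_step (hP : E.Pl) {t : ℕ} (h : t ≠ 7015) (c v) :
    PR (Un t) (Bn t) (E.St t) c v ↔ E.St (t+1) c v := by
  rcases Nat.lt_or_ge t 3 with h1 | h1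
  · interval_cases t
    · rw [St_0, St_1]; exact E.st0 c v
    · rw [St_1, St_2]; exact E.st1 c v
    · rw [St_2, St_sp _ (by omega) (by omega)]; exact E.st2 c v
  rcases Nat.lt_or_ge t 8 with h2 | h2
  · rw [St_sp _ (by omega) (by omega), St_sp _ (by omega) (by omega),
      show t + 1 - 3 = t - 3 + 1 by omega]
    exact E.st3 (by omega) (by omega) c v
  rcases Nat.lt_or_ge t 9 with h2 | h2
  · obtain rfl : t = 8 := by omega
    rw [St_sp _ (by omega) (by omega), St_fl _ (by omega) (by omega)]
    show _ ↔ E.Sfl 0 c v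
    rw [← E.sp_fl']
    exact E.st3 (by omega) (by omega) c v
  rcases Nat.lt_or_ge t 7008 with h3 | h3
  · rw [St_fl _ (by omega) (by omega), St_fl _ (by omega) (by omega),
      show t + 1 - 9 = t - 9 + 1 by omega]
    exact E.st4 (by omega) (by omega) c v
  rcases Nat.lt_or_ge t 7009 with h4 | h4
  · obtain rfl : t = 7008 := by omega
    rw [St_fl _ (by omega) (by omega), St_rows]
    rw [← E.fl_rows']
    exact E.st4 (by omega) (by omega) c v
  rcases Nat.lt_or_ge t 7010 with h5 | h5
  · obtain rfl : t = 7009 := by omega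
    rw [St_rows, St_c0 _ (by omega) (by omega)]
    exact E.st5 c v
  rcases Nat.lt_or_ge t 7016 with h6 | h6
  · rw [St_c0 _ (by omega) (by omega), St_c0 _ (by omega) (by omega),
      show t + 1 - 7010 = t - 7010 + 1 by omega]
    exact E.st6 (by omega) (by omega) c v
  rcases Nat.lt_or_ge t 7022 with h7 | h7
  · rw [St_s0 _ (by omega) (by omega), St_s0 _ (by omega) (by omega),
      show t + 1 - 7016 = t - 7016 + 1 by omega]
    exact E.st7 (by omega) (by omega) c v
  rcases Nat.lt_or_ge t 7028 with h8 | h8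
  · interval_cases t
    · rw [St_s0 _ (by omega) (by omega), St_a]; exact E.st8 hP c v
    · rw [St_a, St_b]; exact E.st9 hP c v
    · rw [St_b, St_c]; exact E.st10 c v
    · rw [St_c, St_d]; exact E.st11 c v
    · rw [St_d, St_e]; exact E.st12 c v
    · rw [St_e, St_c2 _ (by omega) (by omega)]; exact E.st13 c v
  rcases Nat.lt_or_ge t 7034 with h9 | h9
  · rw [St_c2 _ (by omega) (by omega), St_c2 _ (by omega) (by omega),
      show t + 1 - 7028 = t - 7028 + 1 by omega]
    exact E.st14 (by omega) (by omega) c v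
  rcases Nat.lt_or_ge t 7035 with h10 | h10
  · obtain rfl : t = 7034 := by omega
    rw [St_c2 _ (by omega) (by omega), St_z _ (by omega)]
    exact E.st15 c v
  · rw [St_z _ (by omega), St_z _ (by omega), show t + 1 - 7035 = t - 7035 + 1 by omega]
    exact E.st16 (by omega) c v

theorem St_mid {E' : Env} (h1 : E'.PP = E.PP) (h2 : E'.MM = E.MM)
    (h3 : ∀ J v, E'.PB J v ↔ ∃ l, E.IN l J v) (c v) :
    PR (Un 7015) (Bn 7015) (E.St 7015) c v ↔ E'.St 7016 c v := by
  rw [St_c0 _ (by omega) (by omega), St_s0 _ (by omega) (by omega)]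
  refine Iff.trans (E.st6 (i := 5) (by omega) (by omega) c v) (E.c0_s0 h1 h2 h3 c v)

/-- before time 7016 the predicate does not depend on PB -/
theorem St_indep {E' : Env} (h1 : E'.PP = E.PP) (h2 : E'.MM = E.MM) {t} (h : t < 7016) :
    E'.St t = E.St t := by
  have hSP : E'.SP = E.SP := by ext; simp only [SP, h1, h2]
  have hSM : E'.SM = E.SM := by ext; simp only [SM, h1, h2]
  have hIN : E'.IN = E.IN := by ext; simp only [IN, hSP]
  unfold St
  rw [if_pos h, if_pos h]
  have e0 : E'.S0 = E.S0 := by ext; simp only [S0, h1, h2]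
  have e1 : E'.S1 = E.S1 := by ext; simp only [S1, h1, h2]
  have e2 : E'.S2 = E.S2 := by ext; simp only [S2, hSP, hSM]
  have e3 : E'.Ssp = E.Ssp := by ext; simp only [Ssp, hSP, hSM]
  have e4 : E'.Sfl = E.Sfl := by ext; simp only [Sfl, hSP, hSM]
  have e5 : E'.rows = E.rows := by ext; simp only [rows, hSP, hSM]
  have e6 : E'.Sc0 = E.Sc0 := by ext; simp only [Sc0, hIN, e5]
  rw [e0, e1, e2, e3, e4, e5, e6]

end Env

theorem Un_uniq {t o o' d u u'} (h : Un t o d u) (h' : Un t o' d u') (hd : (7000 : ℤ) ∣ o - o') :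
    u = u' := by
  by_cases h0 : t = 0
  · subst h0
    simp [Un] at h h'
    rcases h with ⟨rfl, rfl, rfl⟩ | ⟨rfl, rfl, rfl⟩ | ⟨rfl, rfl, rfl⟩ | ⟨rfl, rfl, rfl⟩ <;>
    rcases h' with ⟨rfl, h1, rfl⟩ | ⟨rfl, h1, rfl⟩ | ⟨rfl, h1, rfl⟩ | ⟨rfl, h1, rfl⟩ <;>
    first | rfl | omega
  by_cases h1 : t = 7009
  · subst h1
    simp [Un] at h h'
    rcases h with ⟨rfl, _, _, rfl⟩ | ⟨l, rfl, rfl, rfl⟩ <;>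
    rcases h' with ⟨rfl, _, _, hh⟩ | ⟨l', rfl, hh, rfl⟩ <;> try omega
    · rfl
    · obtain rfl : l = l' := Fin.ext (by omega)
      rfl
  by_cases h2 : t = 7022
  · subst h2
    simp [Un] at h h'
    rcases h with ⟨rfl, h⟩ | ⟨l, rfl, rfl, rfl⟩ <;>
    rcases h' with ⟨rfl, h'⟩ | ⟨l', rfl, hh, rfl⟩ <;> try omega
    · rfl
    · obtain rfl : l = l' := Fin.ext (by omega)
      rfl
  have key : ∀ {o u}, Un t o d u → u = .id := by
    intro o u h
    unfold Un at h
    by_cases hc : t = 0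
    · rw [if_pos hc] at h; exact absurd hc (by omega)
    rw [if_neg hc] at h; clear hc
    by_cases hc : t = 1
    · rw [if_pos hc] at h; exact absurd h id
    rw [if_neg hc] at h; clear hc
    by_cases hc : t = 2
    · rw [if_pos hc] at h; exact h.1
    rw [if_neg hc] at h; clear hc
    by_cases hc : t < 9
    · rw [if_pos hc] at h; exact h.1
    rw [if_neg hc] at h; clear hc
    by_cases hc : t < 7009
    · rw [if_pos hc] at h; exact h.1
    rw [if_neg hc] at h; clear hc
    by_cases hc : t = 7009
    · rw [if_pos hc] at h; exact absurd hc (by omega)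
    rw [if_neg hc] at h; clear hc
    by_cases hc : t < 7016
    · rw [if_pos hc] at h; exact h.1
    rw [if_neg hc] at h; clear hc
    by_cases hc : t < 7022
    · rw [if_pos hc] at h; exact h.1
    rw [if_neg hc] at h; clear hc
    by_cases hc : t = 7022
    · rw [if_pos hc] at h; exact absurd hc (by omega)
    rw [if_neg hc] at h; clear hc
    by_cases hc : t = 7023
    · rw [if_pos hc] at h; exact h.1
    rw [if_neg hc] at h; clear hc
    by_cases hc : t = 7024
    · rw [if_pos hc] at h; exact h.1
    rw [if_neg hc] at h; clear hc
    by_cases hc : t = 7025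
    · rw [if_pos hc] at h; exact h.1
    rw [if_neg hc] at h; clear hc
    by_cases hc : t = 7026
    · rw [if_pos hc] at h; exact h.1
    rw [if_neg hc] at h; clear hc
    by_cases hc : t = 7027
    · rw [if_pos hc] at h; exact h.1
    rw [if_neg hc] at h; clear hc
    by_cases hc : t < 7034
    · rw [if_pos hc] at h; exact h.1
    rw [if_neg hc] at h; clear hc
    by_cases hc : t = 7034
    · rw [if_pos hc] at h; exact h.1
    rw [if_neg hc] at h; clear hc
    exact h.1
  rw [key h, key h']

theorem Un_d_cases {t o d u} (h : Un t o d u) : d = 0 ∨ d = 1 ∨ d = -1 ∨ d = 7 ∨ d = -7 := by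
  unfold Un at h
  by_cases hc : t = 0
  · rw [if_pos hc] at h; omega
  rw [if_neg hc] at h; clear hc
  by_cases hc : t = 1
  · rw [if_pos hc] at h; exact h.elim
  rw [if_neg hc] at h; clear hc
  by_cases hc : t = 2
  · rw [if_pos hc] at h; omega
  rw [if_neg hc] at h; clear hc
  by_cases hc : t < 9
  · rw [if_pos hc] at h; omega
  rw [if_neg hc] at h; clear hc
  by_cases hc : t < 7009
  · rw [if_pos hc] at h; obtain ⟨_, l, _, rfl⟩ := h; unfold disp; omega
  rw [if_neg hc] at h; clear hc
  by_cases hc : t = 7009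
  · rw [if_pos hc] at h; rcases h with h | ⟨l, _, rfl, _⟩ <;> omega
  rw [if_neg hc] at h; clear hc
  by_cases hc : t < 7016
  · rw [if_pos hc] at h; omega
  rw [if_neg hc] at h; clear hc
  by_cases hc : t < 7022
  · rw [if_pos hc] at h; omega
  rw [if_neg hc] at h; clear hc
  by_cases hc : t = 7022
  · rw [if_pos hc] at h; rcases h with h | ⟨l, _, rfl, _⟩ <;> omega
  rw [if_neg hc] at h; clear hc
  by_cases hc : t = 7023
  · rw [if_pos hc] at h; omega
  rw [if_neg hc] at h; clear hc
  by_cases hc : t = 7024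
  · rw [if_pos hc] at h; omega
  rw [if_neg hc] at h; clear hc
  by_cases hc : t = 7025
  · rw [if_pos hc] at h; omega
  rw [if_neg hc] at h; clear hc
  by_cases hc : t = 7026
  · rw [if_pos hc] at h; omega
  rw [if_neg hc] at h; clear hc
  by_cases hc : t = 7027
  · rw [if_pos hc] at h; omega
  rw [if_neg hc] at h; clear hc
  by_cases hc : t < 7034
  · rw [if_pos hc] at h; omega
  rw [if_neg hc] at h; clear hc
  by_cases hc : t = 7034
  · rw [if_pos hc] at h; omega
  rw [if_neg hc] at h; clear hc
  have := Env.zz_step (t - 7035)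
  omega

theorem PhiRel_uniq {p d m v v'} (h : PhiRel p d m v) (h' : PhiRel p d m v') : v = v' := by
  obtain ⟨o, u, h1, h2, h3⟩ := h
  obtain ⟨o', u', h1', h2', h3'⟩ := h'
  have : u = u' := Un_uniq h2 h2' (by
    have : (o' : ZMod 7000) = (o : ZMod 7000) := h1'.trans h1.symm
    exact_mod_cast (ZMod.intCast_eq_intCast_iff_dvd_sub _ _ 7000).1 this)
  subst this
  rw [h3] at h3'
  exact Option.some.inj h3'

theorem phi_eq {p d m v} : phi p d m = some v ↔ PhiRel p d m v := by
  unfold phi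
  split_ifs with h
  · constructor
    · intro h'; cases h'; exact h.choose_spec
    · intro h'; rw [PhiRel_uniq h.choose_spec h']
  · constructor
    · intro h'; cases h'
    · intro h'; exact absurd ⟨v, h'⟩ h

theorem d_lane {d : ℤ} (h : d = 0 ∨ d = 1 ∨ d = -1 ∨ d = 7 ∨ d = -7) :
    ∃ l : Fin 7, l.val < 5 ∧ dl l = d := by
  rcases h with rfl | rfl | rfl | rfl | rfl
  · exact ⟨0, by simp, by simp [dl]⟩
  · exact ⟨1, by simp, by simp [dl]⟩
  · exact ⟨2, by simp, by simp [dl]⟩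
  · exact ⟨3, by simp, by simp [dl]⟩
  · exact ⟨4, by simp, by simp [dl]⟩

abbrev Cell := Option (Slot × Dat)
abbrev Conf := ℤ → Cell

def seven : Slot := (7, 0)

def Pushed (x : Conf) (c : ℤ) (s : Slot × Dat) : Prop :=
  (∃ l : Fin 7, l.val < 5 ∧ ∃ p m, x (c - dl l) = some (p, m) ∧ phi p (dl l) m = some s.2 ∧
    s.1 = sh p (dl l)) ∨
  (∃ p q m1 m2, x (c - 7) = some (p, m1) ∧ x c = some (q, m2) ∧ BL p ∧ BR q ∧ q = p + seven ∧
    G m1 m2 = some s.2 ∧ s.1 = sh q 0)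

def slot (c : ℤ) (t : ℕ) : Slot := ((c : ZMod 7000), (t : ZMod 49023))
def al (x : Conf) (t : ℕ) (c : ℤ) (v : Dat) : Prop := x c = some (slot c t, v)

theorem slot_sh (c d : ℤ) (t : ℕ) : sh (slot (c - d) t) d = slot c (t+1) := by
  simp [sh, slot]

theorem sh_inj {p q : Slot} {d} (h : sh p d = sh q d) : p = q := by
  simp [sh] at h
  exact Prod.ext h.1 h.2

theorem slot_seven (c : ℤ) (t : ℕ) : slot (c - 7) t + seven = slot c t := by
  simp [slot, seven]

theorem slot_val {c : ℤ} {t : ℕ} (h : t < 49023) : (slot c t).2.val = t := by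
  simp only [slot]
  exact ZMod.val_cast_of_lt h

theorem cast_iff {a b : ℤ} : (a : ZMod 7000) = (b : ZMod 7000) ↔ ∃ q, b = a + 7000 * q := by
  rw [ZMod.intCast_eq_intCast_iff_dvd_sub]
  constructor
  · rintro ⟨q, h⟩; exact ⟨q, by push_cast at h; omega⟩
  · rintro ⟨q, h⟩; exact ⟨q, by push_cast; omega⟩

theorem pushed_al {x : Conf} {t : ℕ} (ht : t < 49023) (c : ℤ) (v : Dat) :
    Pushed x c (slot c (t+1), v) ↔ PR (Un t) (Bn t) (al x t) c v := by
  constructor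
  · rintro (⟨l, hl, p, m, hx, hp, hs⟩ | ⟨p, q, m1, m2, h1, h2, h3, h4, h5, h6, h7⟩)
    · simp only at hs hp
      obtain rfl : p = slot (c - dl l) t := sh_inj (d := dl l) (by rw [← hs, slot_sh])
      rw [phi_eq] at hp
      obtain ⟨o, u, ho, hU, ha⟩ := hp
      rw [slot_val ht] at hU
      obtain ⟨q, hq⟩ := cast_iff.1 ho
      exact Or.inl ⟨dl l, u, o, q, m, hU, hq, hx, ha⟩
    · simp only at h6 h7
      obtain rfl : q = slot c t := sh_inj (d := 0) (by rw [← h7, ← slot_sh c 0 t, sub_zero])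
      obtain rfl : p = slot (c - 7) t := by
        rw [← slot_seven] at h5; exact (add_right_cancel h5).symm
      obtain ⟨o, ho, hc⟩ := h4
      rw [slot_val ht] at ho
      obtain ⟨q, hq⟩ := cast_iff.1 hc
      exact Or.inr ⟨o, q, m1, m2, ho, hq, h1, h2, h6⟩
  · rintro (⟨d, u, o, q, m, hU, hc, hS, ha⟩ | ⟨o, q, m1, m2, hB, hc, h1, h2, h3⟩)
    · obtain ⟨l, hl, rfl⟩ := d_lane (Un_d_cases hU)
      refine Or.inl ⟨l, hl, _, m, hS, ?_, (slot_sh c _ t).symm⟩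
      rw [phi_eq]
      exact ⟨o, u, cast_iff.2 ⟨q, hc⟩, by rwa [slot_val ht], ha⟩
    · refine Or.inr ⟨_, _, m1, m2, h1, h2, ⟨o, by rwa [slot_val ht], ?_⟩, ⟨o, by rwa [slot_val ht], ?_⟩,
        (slot_seven _ _).symm, h3, ?_⟩
      · exact cast_iff.2 ⟨q, by omega⟩
      · exact cast_iff.2 ⟨q, by omega⟩
      · have := slot_sh c 0 t
        rw [sub_zero] at this
        exact this.symm

open Classical in
noncomputable def Phi (x : Conf) : Conf := fun c =>
  if h : ∃! s, Pushed x c s then some h.choose else none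

def R (x x' : Conf) : Prop := ∀ c s, x' c = some s → Pushed x c s

theorem Phi_eq {x c s} : Phi x c = some s ↔ Pushed x c s ∧ ∀ s', Pushed x c s' → s' = s := by
  unfold Phi
  split_ifs with h
  · constructor
    · intro h'; cases h'; exact h.choose_spec
    · intro h'; congr 1; exact h'.2 _ h.choose_spec.1
  · constructor
    · intro h'; cases h'
    · intro h'; exact absurd ⟨s, h'⟩ h

theorem R_Phi (x) : R x (Phi x) := fun c s h => (Phi_eq.1 h).1

end UE

namespace UE

def chE (x : ℕ → Conf) : Env where
  PP J v := al (x 0) 0 (7000 * J) v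
  MM J v := al (x 0) 0 (7000 * J + 7) v
  PB J v := al (x 7016) 7016 (7000 * J) v

def chE' (x : ℕ → Conf) : Env where
  PP J v := al (x 0) 0 (7000 * J) v
  MM J v := al (x 0) 0 (7000 * J + 7) v
  PB J v := ∃ l, (chE x).IN l J v

theorem IN_plain {E : Env} {l J v} (h : E.IN l J v) : ∃ p, v = .plain p := by
  obtain ⟨p, _, rfl⟩ := h; exact ⟨_, rfl⟩

theorem chE'_Pl (x) : (chE' x).Pl := by
  rintro J v ⟨l, h⟩; exact IN_plain h

theorem R_al {x y : Conf} (h : R x y) {t} (ht : t < 49023) {c v} (ha : al y (t+1) c v) :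
    PR (Un t) (Bn t) (al x t) c v := (pushed_al ht c v).1 (h _ _ ha)

section

theorem PR0 {x : ℕ → Conf} (hR : ∀ t < 49023, R (x t) (x (t+1))) {S S0 : ℤ → Dat → Prop} (h : ∀ J v, (S (7000*J) v → S0 (7000*J) v) ∧ (S (7000*J+7) v → S0 (7000*J+7) v))
    {c v} (hp : PR (Un 0) (Bn 0) S c v) : PR (Un 0) (Bn 0) S0 c v := by
  rcases hp with ⟨d, u, o, q, m, hU, hc, hS, ha⟩ | ⟨o, q, m1, m2, hB, _⟩
  · refine Or.inl ⟨d, u, o, q, m, hU, hc, ?_, ha⟩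
    simp only [Un, if_true] at hU
    rcases hU with ⟨rfl, _⟩ | ⟨rfl, _⟩ | ⟨rfl, _⟩ | ⟨rfl, _⟩
    · rw [hc, zero_add] at hS ⊢; exact (h q m).1 hS
    · rw [hc, zero_add] at hS ⊢; exact (h q m).1 hS
    · rw [hc, add_comm] at hS ⊢; exact (h q m).2 hS
    · rw [hc, add_comm] at hS ⊢; exact (h q m).2 hS
  · simp [Bn] at hB

theorem sound_one {x : ℕ → Conf} (hR : ∀ t < 49023, R (x t) (x (t+1))) {c v} (h : al (x 1) 1 c v) (E : Env) (h1 : E.PP = (chE x).PP) (h2 : E.MM = (chE x).MM) :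
    E.St 1 c v := by
  rw [E.St_1]
  rw [← E.st0]
  refine PR0 hR ?_ (R_al (hR 0 (by omega)) (by omega) h)
  intro J v
  refine ⟨fun h => ⟨J, Or.inl ⟨rfl, ?_⟩⟩, fun h => ⟨J, Or.inr ⟨rfl, ?_⟩⟩⟩
  · rw [h1]; exact h
  · rw [h2]; exact h

theorem sound_pre {x : ℕ → Conf} (hR : ∀ t < 49023, R (x t) (x (t+1))) {t} (ht0 : 1 ≤ t) (ht : t ≤ 7015) : ∀ {c v}, al (x t) t c v → (chE' x).St t c v := by
  induction t, ht0 using Nat.le_induction with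
  | base => intro c v h; exact sound_one hR h _ rfl rfl
  | succ t h1 ih =>
    intro c v h
    rw [← (chE' x).St_step (chE'_Pl x) (by omega)]
    exact PR_mono (fun c v => ih (by omega)) (R_al (hR t (by omega)) (by omega) h)

theorem sound_mid {x : ℕ → Conf} (hR : ∀ t < 49023, R (x t) (x (t+1))) {c v} (h : al (x 7016) 7016 c v) : (chE' x).St 7016 c v := by
  have := R_al (hR 7015 (by omega)) (by omega) h
  rw [← (chE x).St_mid (E' := chE' x) rfl rfl (fun J v => Iff.rfl)]
  refine PR_mono (fun c v hh => ?_) this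
  rw [← (chE x).St_indep (E' := chE' x) rfl rfl (by omega)]
  exact sound_pre hR (by omega) (by omega) hh

theorem PB_IN {x : ℕ → Conf} (hR : ∀ t < 49023, R (x t) (x (t+1))) {J v} (h : (chE x).PB J v) : ∃ l, (chE x).IN l J v := by
  have := sound_mid hR h
  rw [Env.St_s0 _ (by omega) (by omega)] at this
  rcases this with h | ⟨J', i, hi, hc, h⟩
  · obtain ⟨K, h1, h2⟩ := Env.rows_bd h
    omega
  · obtain rfl : J = J' := by omega
    exact h

theorem chE_Pl {x : ℕ → Conf} (hR : ∀ t < 49023, R (x t) (x (t+1))) : (chE x).Pl := by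
  intro J v h
  obtain ⟨l, h⟩ := PB_IN hR h
  exact IN_plain h

theorem sound_post {x : ℕ → Conf} (hR : ∀ t < 49023, R (x t) (x (t+1))) {t} (ht0 : 7016 ≤ t) (ht : t ≤ 49023) : ∀ {c v}, al (x t) t c v → (chE x).St t c v := by
  induction t, ht0 using Nat.le_induction with
  | base =>
    intro c v h
    have := sound_mid hR h
    rw [Env.St_s0 _ (by omega) (by omega)] at this ⊢
    rcases this with h' | ⟨J', i, hi, hc, h'⟩
    · exact Or.inl h'
    · refine Or.inr ⟨J', i, hi, hc, ?_⟩
      obtain rfl : i = 0 := by omega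
      rw [show c = 7000 * J' by push_cast at hc; omega] at h
      exact h
  | succ t h1 ih =>
    intro c v h
    rw [← (chE x).St_step (chE_Pl hR) (by omega)]
    exact PR_mono (fun c v => ih (by omega)) (R_al (hR t (by omega)) (by omega) h)

theorem sound {x : ℕ → Conf} (hR : ∀ t < 49023, R (x t) (x (t+1))) {t} (ht0 : 1 ≤ t) (ht : t ≤ 49023) {c v} (h : al (x t) t c v) : (chE x).St t c v := by
  rcases Nat.lt_or_ge t 7016 with h1 | h1
  · rw [← (chE x).St_indep (E' := chE' x) rfl rfl (by omega)]
    exact sound_pre hR ht0 (by omega) h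
  · exact sound_post hR h1 ht h

end

open Classical in
noncomputable def dec (x : Conf) : Conf := fun J =>
  if h : ∃ s : Slot × Dat, x (7000 * J) = some ((0, 0), .plain s.1) ∧ x (7000 * J + 7) = some ((7, 0), s.2)
  then some h.choose else none

theorem dec_eq {x J s} : dec x J = some s ↔
    x (7000 * J) = some ((0, 0), .plain s.1) ∧ x (7000 * J + 7) = some ((7, 0), s.2) := by
  unfold dec
  split_ifs with h
  · constructor
    · intro h'; cases h'; exact h.choose_spec
    · rintro ⟨h1, h2⟩
      obtain ⟨h3, h4⟩ := h.choose_spec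
      have e3 := h1.symm.trans h3
      have e4 := h2.symm.trans h4
      simp at e3 e4
      congr 1
      exact (Prod.ext e3 e4).symm
  · constructor
    · intro h'; cases h'
    · intro h'; exact absurd ⟨s, h'⟩ h

theorem slot0 (J : ℤ) : slot (7000 * J) 0 = (0, 0) := by
  have : (7000 : ZMod 7000) = 0 := rfl
  simp [slot, this]
theorem slot7 (J : ℤ) : slot (7000 * J + 7) 0 = (7, 0) := by
  have : (7000 : ZMod 7000) = 0 := rfl
  simp [slot, this]
theorem slotU (c : ℤ) : slot c 49023 = slot c 0 := by
  simp [slot]; rfl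

theorem dec_al {x J p m} : dec x J = some (p, m) ↔ al x 0 (7000 * J) (.plain p) ∧ al x 0 (7000 * J + 7) m := by
  rw [dec_eq, al, al, slot0, slot7]

theorem al_U {x c v} : al x 49023 c v ↔ al x 0 c v := by
  rw [al, al, slotU]

theorem al_uniq {x t c v v'} (h : al x t c v) (h' : al x t c v') : v = v' := by
  unfold al at *
  rw [h] at h'; simpa using h'

theorem zz_S : zz 41988 = 7 := by norm_num [zz]

theorem chE_dec {x J p m} (h : (chE x).SP J (.plain p)) (h' : (chE x).SM J m) :
    dec (x 0) J = some (p, m) := by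
  rw [dec_al]
  obtain ⟨p', m', h1, h2, h3⟩ := h
  obtain ⟨p'', h4, h5⟩ := h'
  cases h1
  exact ⟨h2, h5⟩

theorem chE_dec' {x J v} (h : (chE x).SP J v) : dec (x 0) J ≠ none := by
  obtain ⟨p', m', h1, h2, h3⟩ := h
  rw [dec_al.2 ⟨h2, h3⟩]; simp

theorem chE_dec'' {x J v} (h : (chE x).SM J v) : dec (x 0) J ≠ none := by
  obtain ⟨p', h2, h3⟩ := h
  rw [dec_al.2 ⟨h2, h3⟩]; simp

theorem dec_R {x : ℕ → Conf} (hR : ∀ t < 49023, R (x t) (x (t+1))) : R (dec (x 0)) (dec (x 49023)) := by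
  rintro J ⟨p', v⟩ h
  rw [dec_al, ← al_U, ← al_U] at h
  obtain ⟨h1, h2⟩ := h
  have s1 := sound hR (by omega) (by omega) h1
  have s2 := sound hR (by omega) (by omega) h2
  rw [Env.St_z _ (by omega)] at s1 s2
  norm_num at s1 s2
  have hP : (chE x).PB J (.plain p') := by
    obtain ⟨K, ⟨h, h'⟩ | ⟨h, h'⟩⟩ := s1
    · obtain rfl : K = J := by omega
      exact h'
    · rw [zz_S] at h; omega
  have hM : ∃ l, (chE x).FM l J v := by
    obtain ⟨K, ⟨h, h'⟩ | ⟨h, h'⟩⟩ := s2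
    · omega
    · rw [zz_S] at h
      obtain rfl : K = J := by omega
      exact h'
  have hu : ∀ {p}, (chE x).PB J (.plain p) → p = p' := by
    intro p h
    have := al_uniq h hP
    simpa using this
  obtain ⟨l, ⟨hl, p, m, q1, q2, q3, q4⟩ | ⟨rfl, v1, v2, ⟨p, m, q1, q2, q3, q4⟩, ⟨p0, m0, r1, r2, r3, r4⟩, hG⟩⟩ := hM
  · left
    refine ⟨l, hl, p, m, chE_dec q2 q3, ?_, (hu q1).symm⟩
    simpa [Psi, hl] using q4
  · right
    have e5 : dl 5 = 7 := by simp [dl]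
    have e6 : dl 6 = 0 := by simp [dl]
    rw [e5] at q1 q2 q3
    rw [e6] at r1 r2 r3
    rw [sub_zero] at r2 r3
    simp [Psi] at q4 r4
    obtain ⟨hb, rfl⟩ := q4
    obtain ⟨hb', rfl⟩ := r4
    refine ⟨p, p0, m, m0, chE_dec q2 q3, chE_dec r2 r3, hb, hb', ?_, hG, (hu r1).symm⟩
    have := (hu q1).trans (hu r1).symm
    simp [sh] at this
    refine Prod.ext ?_ ?_
    · simp [seven]; exact this.1.symm
    · simp [seven]; exact this.2.symm

/-- children in the S phase -/
theorem sphase {x : ℕ → Conf} (hR : ∀ t < 49023, R (x t) (x (t+1))) {J} (h : dec (x 49023) J ≠ none)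
    {j : ℕ} (hj : j ≤ 41988) :
    (∃ v, al (x (49023 - j)) (49023 - j) (7000 * J) v) ∧
    (∃ v, al (x (49023 - j)) (49023 - j) (7000 * J + zz (41988 - j)) v) := by
  induction j with
  | zero =>
    obtain ⟨⟨p, m⟩, h⟩ := Option.ne_none_iff_exists'.1 h
    rw [dec_al, ← al_U, ← al_U] at h
    refine ⟨⟨_, h.1⟩, ?_⟩
    rw [Nat.sub_zero, zz_S]
    exact ⟨_, h.2⟩
  | succ j ih =>
    obtain ⟨⟨v, hv⟩, w, hw⟩ := ih (by omega)
    have e1 : 49023 - j = (49023 - (j+1)) + 1 := by omega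
    have e2 : 41988 - j = (41988 - (j+1)) + 1 := by omega
    rw [e1] at hv hw
    rw [e2] at hw
    have z1 := Env.zz_bd (41988 - (j+1))
    have z2 := Env.zz_bd (41988 - (j+1) + 1)
    have et : 49023 - (j+1) = 7035 + (41988 - (j+1)) := by omega
    constructor
    · rcases R_al (hR _ (by omega)) (by omega) hv with ⟨d, u, o, q, m, hU, hc, hS, ha⟩ | ⟨o, q, m1, m2, hB, _⟩
      · rw [Env.Un_z et] at hU
        obtain rfl : d = 0 := by omega
        exact ⟨m, by simpa using hS⟩
      · exact absurd hB (Env.Bn_no (by omega) (by omega) (by omega) (by omega))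
    · rcases R_al (hR _ (by omega)) (by omega) hw with ⟨d, u, o, q, m, hU, hc, hS, ha⟩ | ⟨o, q, m1, m2, hB, _⟩
      · rw [Env.Un_z et] at hU
        refine ⟨m, ?_⟩
        convert hS using 1
        omega
      · exact absurd hB (Env.Bn_no (by omega) (by omega) (by omega) (by omega))

abbrev Idx := Fin 7 × Fin 31

def pos (i : Idx) (t : ℕ) : ℤ :=
  if i.2.val < 28 then 7000 * dl i.1 + (i.2.val - 7)
  else if i.2.val < 30 then 7 * (i.2.val - 27) + i.1.val + 7 * disp i.1 (t - 9)
  else 7000 * dl i.1 + zz (t - 7035)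

theorem pos_bd (i t) : -63000 ≤ pos i t ∧ pos i t ≤ 63000 := by
  have h1 := dl_bd i.1
  have h2 := Env.zz_bd (t - 7035)
  have h3 := i.2.2
  have h4 := i.1.2
  unfold pos disp
  split_ifs <;> omega

theorem pos_step (i t) : -7 ≤ pos i (t+1) - pos i t ∧ pos i (t+1) - pos i t ≤ 7 := by
  unfold pos
  split_ifs with h h'
  · omega
  · rcases Nat.lt_or_ge t 9 with h0 | h0
    · rw [show t + 1 - 9 = t - 9 by omega]; omega
    · rw [show t + 1 - 9 = (t - 9) + 1 by omega]
      have h1 := dl_bd i.1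
      unfold disp; omega
  · rcases Nat.lt_or_ge t 7035 with h0 | h0
    · rw [show t + 1 - 7035 = t - 7035 by omega]; omega
    · rw [show t + 1 - 7035 = (t - 7035) + 1 by omega]
      have := Env.zz_step (t - 7035)
      omega

def Own (x0 : Conf) (t : ℕ) (c : ℤ) : Prop := ∃ J i, dec x0 J ≠ none ∧ c = 7000 * J + pos i t

theorem own_static {x0 : Conf} {t c J} (l : Fin 7) {o : ℤ} (h : dec x0 (J - dl l) ≠ none) (hc : c = 7000 * J + o)
    (h1 : -7 ≤ o) (h2 : o ≤ 20) : Own x0 t c := by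
  refine ⟨J - dl l, (l, ⟨(o + 7).toNat, by omega⟩), h, ?_⟩
  unfold pos
  rw [if_pos (by show (o + 7).toNat < 28; omega)]
  simp only
  omega

theorem own_static0 {x0 : Conf} {t c J} {o : ℤ} (h : dec x0 J ≠ none) (hc : c = 7000 * J + o)
    (h1 : -7 ≤ o) (h2 : o ≤ 20) : Own x0 t c :=
  own_static (J := J) 0 (by simpa [dl] using h) hc h1 h2

theorem owner {x : ℕ → Conf} (hR : ∀ t < 49023, R (x t) (x (t+1))) {t c v} (h1 : 2 ≤ t) (h2 : t ≤ 49023)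
    (ha : al (x t) t c v) : Own (x 0) t c := by
  have hs := sound hR (by omega) h2 ha
  have rowsO : ∀ {c v}, (chE x).rows c v → Own (x 0) t c := by
    rintro c v ⟨J, l, ⟨h, h'⟩ | ⟨h, h'⟩⟩
    · exact own_static (J := J) (o := 7 + (l:ℕ)) l (chE_dec' h') (by omega) (by omega) (by omega)
    · exact own_static (J := J) (o := 14 + (l:ℕ)) l (chE_dec'' h') (by omega) (by omega) (by omega)
  have INO : ∀ {c J l v} {o : ℤ}, (chE x).IN l J v → c = 7000 * J + o → -7 ≤ o → o ≤ 20 → Own (x 0) t c := by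
    rintro c J l v o ⟨p, h, _⟩ hc h1 h2
    exact own_static l (chE_dec' h) hc h1 h2
  have PBO : ∀ {c J v} {o : ℤ}, (chE x).PB J v → c = 7000 * J + o → -7 ≤ o → o ≤ 20 → Own (x 0) t c := by
    intro c J v o h hc h1 h2
    obtain ⟨l, h⟩ := PB_IN hR h
    exact INO h hc h1 h2
  have pbmO : ∀ {c v}, (chE x).pbm c v → Own (x 0) t c := by
    rintro c v ⟨J, hc, h⟩
    exact PBO (o := -7) h (by omega) (by omega) (by omega)
  have MFO : ∀ {c J l v} {o : ℤ}, (chE x).MF l J v → c = 7000 * J + o → -7 ≤ o → o ≤ 20 → Own (x 0) t c := by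
    rintro c J l v o ⟨p, m, _, h, _⟩ hc h1 h2
    exact own_static l (chE_dec' h) hc h1 h2
  have FMM : ∀ {J l v}, (chE x).FM l J v → ∃ l' v', (chE x).MF l' J v' := by
    rintro J l v (⟨_, h⟩ | ⟨_, v1, v2, h, _⟩)
    · exact ⟨_, _, h⟩
    · exact ⟨_, _, h⟩
  rcases Nat.lt_or_ge t 3 with g | g
  · obtain rfl : t = 2 := by omega
    rw [Env.St_2] at hs
    obtain ⟨J, ⟨h, h'⟩ | ⟨h, h'⟩⟩ := hs
    · exact own_static0 (J := J) (o := 7) (chE_dec'' h') (by omega) (by omega) (by omega)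
    · exact own_static0 (J := J) (o := 8) (chE_dec' h') (by omega) (by omega) (by omega)
  rcases Nat.lt_or_ge t 9 with g | g
  · rw [Env.St_sp _ (by omega) (by omega)] at hs
    obtain ⟨J, i, hi, ⟨h, h'⟩ | ⟨h, h'⟩⟩ := hs
    · exact own_static0 (J := J) (o := 7 + i) (chE_dec' h') (by omega) (by omega) (by omega)
    · exact own_static0 (J := J) (o := 14 + i) (chE_dec'' h') (by omega) (by omega) (by omega)
  rcases Nat.lt_or_ge t 7009 with g | g
  · rw [Env.St_fl _ (by omega) (by omega)] at hs
    obtain ⟨J, l, ⟨h, h'⟩ | ⟨h, h'⟩⟩ := hs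
    · exact ⟨J, (l, 28), chE_dec' h', by simp [pos]; omega⟩
    · exact ⟨J, (l, 29), chE_dec'' h', by simp [pos]; omega⟩
  rcases Nat.lt_or_ge t 7010 with g | g
  · obtain rfl : t = 7009 := by omega
    rw [Env.St_rows] at hs
    exact rowsO hs
  rcases Nat.lt_or_ge t 7016 with g | g
  · rw [Env.St_c0 _ (by omega) (by omega)] at hs
    rcases hs with hs | ⟨J, l, hc, h⟩
    · exact rowsO hs
    · exact INO h hc (by omega) (by omega)
  rcases Nat.lt_or_ge t 7023 with g | g
  · rw [Env.St_s0 _ (by omega) (by omega)] at hs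
    rcases hs with hs | ⟨J, i, hi, hc, h⟩
    · exact rowsO hs
    · exact PBO h hc (by omega) (by omega)
  rcases Nat.lt_or_ge t 7028 with g | g
  · interval_cases t
    · rw [Env.St_a] at hs
      rcases hs with hs | hs | ⟨J, l, hc, p, h, _⟩
      · exact rowsO hs
      · exact pbmO hs
      · exact PBO h hc (by omega) (by omega)
    · rw [Env.St_b] at hs
      rcases hs with hs | ⟨J, l, ⟨hc, p, _, h, _⟩ | ⟨hc, h⟩⟩
      · exact pbmO hs
      · exact own_static (J := J) (o := 7 + (l:ℕ)) l (chE_dec' h) (by omega) (by omega) (by omega)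
      · exact own_static (J := J) (o := 14 + (l:ℕ)) l (chE_dec'' h) (by omega) (by omega) (by omega)
    · rw [Env.St_c] at hs
      rcases hs with hs | ⟨J, l, hc, h⟩
      · exact pbmO hs
      · exact MFO (o := 14 + (l:ℕ)) h (by omega) (by omega) (by omega)
    · rw [Env.St_d] at hs
      rcases hs with hs | ⟨J, ⟨l, _, hc, h⟩ | ⟨hc, h⟩⟩
      · exact pbmO hs
      · exact MFO (o := 14 + (l:ℕ)) h (by omega) (by omega) (by omega)
      · exact MFO h hc (by omega) (by omega)
    · rw [Env.St_e] at hs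
      rcases hs with hs | ⟨J, ⟨l, _, hc, h⟩ | ⟨hc, h⟩⟩
      · exact pbmO hs
      · exact MFO (o := 14 + (l:ℕ)) h (by omega) (by omega) (by omega)
      · exact MFO h hc (by omega) (by omega)
  rcases Nat.lt_or_ge t 7035 with g | g
  · rw [Env.St_c2 _ (by omega) (by omega)] at hs
    rcases hs with hs | ⟨J, l, hc, h⟩
    · exact pbmO hs
    · obtain ⟨l', v', h⟩ := FMM h
      exact MFO (o := 14 + max ((l : ℕ) - ((t - 7028 : ℕ) : ℤ)) 0) h (by omega) (by omega) (by omega)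
  · rw [Env.St_z _ (by omega)] at hs
    rcases hs with ⟨J, ⟨hc, h⟩ | ⟨hc, l, h⟩⟩
    · exact PBO (o := 0) h (by omega) (by omega) (by omega)
    · obtain ⟨l', v', p, m, _, h, _⟩ := FMM h
      exact ⟨J - dl l', (l', 30), chE_dec' h, by simp [pos]; omega⟩

/-- times U and U+1 (ages 0 and 1 of the next period) -/
theorem owner_next {x : ℕ → Conf} (hR : ∀ t < 49024, R (x t) (x (t+1))) {c v}
    (ha : al (x 49024) 1 c v) : Own (x 0) 49024 c := by
  have key : ∀ {J v}, al (x 49023) 0 (7000 * J) v → ∃ l, dec (x 0) (J - dl l) ≠ none := by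
    intro J v h
    rw [← al_U] at h
    have hs := sound (fun t ht => hR t (by omega)) (by omega) (by omega) h
    rw [Env.St_z _ (by omega)] at hs
    norm_num at hs
    clear h
    rcases hs with ⟨K, ⟨hc, h⟩ | ⟨hc, l, h⟩⟩
    · obtain rfl : K = J := by omega
      obtain ⟨l, p, h, _⟩ := PB_IN (fun t ht => hR t (by omega)) h
      exact ⟨l, chE_dec' h⟩
    · rw [zz_S] at hc; omega
  have key' : ∀ {J v}, al (x 49023) 0 (7000 * J + 7) v → ∃ l, dec (x 0) (J - dl l) ≠ none := by
    intro J v h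
    rw [← al_U] at h
    have hs := sound (fun t ht => hR t (by omega)) (by omega) (by omega) h
    rw [Env.St_z _ (by omega)] at hs
    norm_num at hs
    clear h
    rcases hs with ⟨K, ⟨hc, h⟩ | ⟨hc, l, h⟩⟩
    · omega
    · rw [zz_S] at hc
      obtain rfl : K = J := by omega
      rcases h with ⟨_, p, m, _, h, _⟩ | ⟨_, v1, v2, ⟨p, m, _, h, _⟩, _⟩
      · exact ⟨_, chE_dec' h⟩
      · exact ⟨_, chE_dec' h⟩
  rcases R_al (t := 0) (hR 49023 (by omega)) (by omega) ha with ⟨d, u, o, q, m, hU, hc, hS, ha⟩ | ⟨o, q, m1, m2, hB, _⟩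
  · simp only [Un, if_true] at hU
    rw [hc] at hS
    rcases hU with ⟨rfl, rfl, _⟩ | ⟨rfl, rfl, _⟩ | ⟨rfl, rfl, _⟩ | ⟨rfl, rfl, _⟩
    · obtain ⟨l, h⟩ := key (J := q) (by simpa using hS)
      exact own_static (o := 0) l h (by omega) (by omega) (by omega)
    · obtain ⟨l, h⟩ := key (J := q) (by simpa using hS)
      exact own_static (o := 1) l h (by omega) (by omega) (by omega)
    · obtain ⟨l, h⟩ := key' (J := q) (by simpa [add_comm] using hS)
      exact own_static (o := 7) l h (by omega) (by omega) (by omega)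
    · obtain ⟨l, h⟩ := key' (J := q) (by simpa [add_comm] using hS)
      exact own_static (o := 8) l h (by omega) (by omega) (by omega)
  · simp [Bn] at hB

end UE

namespace UE

def shf (a : ℤ) (x : Conf) : Conf := fun c => x (c + a)

theorem Pushed_shf {x a c s} : Pushed (shf a x) c s ↔ Pushed x (c + a) s := by
  unfold Pushed shf
  simp only [show ∀ d : ℤ, c + a - d = c - d + a from fun d => by ring]

theorem R_shf {x x'} (a) (h : R x x') : R (shf a x) (shf a x') := by
  intro c s hs
  rw [Pushed_shf]
  exact h _ _ hs

theorem dec_shf (x a) : dec (shf (7000 * a) x) = shf a (dec x) := by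
  ext J s
  show dec (shf (7000 * a) x) J = some s ↔ dec x (J + a) = some s
  rw [dec_eq, dec_eq]
  unfold shf
  rw [show 7000 * (J + a) = 7000 * J + 7000 * a by ring, show 7000 * J + 7 + 7000 * a = 7000 * J + 7000 * a + 7 by ring]

theorem dec_iter_shf (n : ℕ) (x a) : dec^[n] (shf (7000 ^ n * a) x) = shf a (dec^[n] x) := by
  induction n generalizing x with
  | zero => simp
  | succ n ih =>
    rw [Function.iterate_succ_apply, Function.iterate_succ_apply, ← ih, pow_succ', mul_assoc, dec_shf]

theorem shf_shf (a b x) : shf a (shf b x) = shf (a + b) x := by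
  ext c s; simp [shf, add_assoc]

structure Ch (X : ℕ → Conf) : Prop where
  r : ∀ t, R (X t) (X (t+1))

noncomputable def W (X : ℕ → Conf) (n : ℕ) (c : ℤ) (τ : ℕ) : Cell := dec^[n] (shf c (X τ)) 0
def V (X : ℕ → Conf) (n : ℕ) (c : ℤ) (τ : ℕ) : Prop := W X n c τ ≠ none

theorem W_apply (X n c τ J) : dec^[n] (shf c (X τ)) J = W X n (c + 7000 ^ n * J) τ := by
  unfold W
  have := congrFun (dec_iter_shf n (shf c (X τ)) J) 0
  rw [shf_shf] at this
  rw [add_comm c, this]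
  simp [shf]

section

theorem lev_R {X : ℕ → Conf} (hX : Ch X) (n : ℕ) (c : ℤ) (τ Θ : ℕ) :
    R (dec^[n] (shf c (X (τ + Θ * 49023 ^ n)))) (dec^[n] (shf c (X (τ + (Θ + 1) * 49023 ^ n)))) := by
  induction n generalizing τ Θ with
  | zero => simpa [add_assoc] using R_shf c (hX.r (τ + Θ))
  | succ n ih =>
    have := dec_R (x := fun t => dec^[n] (shf c (X (τ + Θ * 49023 ^ (n+1) + t * 49023 ^ n))))
      (fun t _ => ih _ t)
    rw [Function.iterate_succ_apply', Function.iterate_succ_apply']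
    have e1 : τ + Θ * 49023 ^ (n+1) + 0 * 49023 ^ n = τ + Θ * 49023 ^ (n+1) := by ring
    have e2 : τ + Θ * 49023 ^ (n+1) + 49023 * 49023 ^ n = τ + (Θ + 1) * 49023 ^ (n+1) := by ring
    simp only [e1, e2] at this
    exact this

theorem lev_owner {X : ℕ → Conf} (hX : Ch X) {n : ℕ} {c : ℤ} {τ : ℕ} (hτ : 2 * 49023 ^ (n+1) ≤ τ) (h : V X n c τ) :
    ∃ i : Idx, ∃ t : ℕ, t ≤ 49024 ∧ V X (n+1) (c - 7000 ^ n * pos i t) (τ - t * 49023 ^ n) := by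
  obtain ⟨⟨p, m⟩, hs⟩ := Option.ne_none_iff_exists'.1 h
  have hb : 0 < 49023 ^ n := by positivity
  obtain ⟨a, ha⟩ : ∃ a : ℤ, (a : ZMod 7000) = p.1 := ⟨p.1.val, by simp⟩
  have hp2 : (((p.2.val : ℕ)) : ZMod 49023) = p.2 := by simp
  have hlt : p.2.val < 49023 := ZMod.val_lt _
  have key : ∀ t' ≤ 49024, Own (dec^[n] (shf (c - 7000 ^ n * a) (X (τ - t' * 49023 ^ n)))) t' a →
      ∃ i : Idx, ∃ t : ℕ, t ≤ 49024 ∧ V X (n+1) (c - 7000 ^ n * pos i t) (τ - t * 49023 ^ n) := by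
    rintro t' h1 ⟨J, i, h2, h3⟩
    refine ⟨i, t', h1, ?_⟩
    rw [← Function.iterate_succ_apply' dec, W_apply] at h2
    unfold V
    convert h2 using 2
    rw [h3, Nat.succ_eq_add_one]; ring
  have hle : ∀ t' ≤ 49024, t' * 49023 ^ n ≤ τ := by
    intro t' h
    calc t' * 49023 ^ n ≤ (2 * 49023) * 49023 ^ n := Nat.mul_le_mul_right _ (by omega)
      _ = 2 * 49023 ^ (n+1) := by ring
      _ ≤ τ := hτ
  have hal : ∀ t' ≤ 49024, dec^[n] (shf (c - 7000 ^ n * a) (X (τ - t' * 49023 ^ n + t' * 49023 ^ n))) a = some (p, m) := by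
    intro t' h
    rw [W_apply, Nat.sub_add_cancel (hle t' h), sub_add_cancel, hs]
  have hch : ∀ t' t, R (dec^[n] (shf (c - 7000 ^ n * a) (X (τ - t' * 49023 ^ n + t * 49023 ^ n))))
     (dec^[n] (shf (c - 7000 ^ n * a) (X (τ - t' * 49023 ^ n + (t+1) * 49023 ^ n)))) := by
    intro t' t; exact lev_R hX _ _ _ _
  rcases Nat.lt_or_ge p.2.val 2 with h2 | h2
  · rcases Nat.lt_or_ge p.2.val 1 with h1 | h1
    · apply key 49023 (by omega)
      have := owner (x := fun t => dec^[n] (shf (c - 7000 ^ n * a) (X (τ - 49023 * 49023 ^ n + t * 49023 ^ n))))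
        (fun t _ => hch 49023 t) (t := 49023) (c := a) (v := m) (by omega) (by omega) (by
          rw [al_U, al, hal 49023 (by omega)]
          have : p.2 = 0 := by rw [← hp2]; simp [show p.2.val = 0 by omega]
          simp [slot, ha, ← this])
      simpa using this
    · apply key 49024 (by omega)
      have := owner_next (x := fun t => dec^[n] (shf (c - 7000 ^ n * a) (X (τ - 49024 * 49023 ^ n + t * 49023 ^ n))))
        (fun t _ => hch 49024 t) (c := a) (v := m) (by
          rw [al, hal 49024 (by omega)]
          have : p.2 = 1 := by rw [← hp2]; simp [show p.2.val = 1 by omega]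
          simp [slot, ha, ← this])
      simpa using this
  · apply key p.2.val (by omega)
    have := owner (x := fun t => dec^[n] (shf (c - 7000 ^ n * a) (X (τ - p.2.val * 49023 ^ n + t * 49023 ^ n))))
        (fun t _ => hch p.2.val t) (t := p.2.val) (c := a) (v := m) h2 (by omega) (by
          rw [al, hal p.2.val (by omega)]
          simp [slot, ha])
    simpa using this

theorem lev_sphase {X : ℕ → Conf} (hX : Ch X) {n : ℕ} {c : ℤ} {τ : ℕ} (hτ : 49023 ^ (n+1) ≤ τ) (h : V X (n+1) c τ) {j : ℕ} (hj : j ≤ 41988) :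
    (∃ v, W X n c (τ - j * 49023 ^ n) = some (slot 0 (49023 - j), v)) ∧
    (∃ v, W X n (c + 7000 ^ n * zz (41988 - j)) (τ - j * 49023 ^ n) = some (slot (zz (41988 - j)) (49023 - j), v)) := by
  obtain ⟨τ0, rfl⟩ : ∃ τ0, τ = τ0 + 49023 ^ (n+1) := ⟨τ - 49023 ^ (n+1), by omega⟩
  have := sphase (x := fun t => dec^[n] (shf c (X (τ0 + t * 49023 ^ n)))) (fun t _ => lev_R hX _ _ _ _) (J := 0) (by
    rw [← Function.iterate_succ_apply' dec, ← pow_succ']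
    exact h) hj
  have e : τ0 + (49023 - j) * 49023 ^ n = τ0 + 49023 ^ (n+1) - j * 49023 ^ n := by
    rw [Nat.sub_mul, ← pow_succ']
    have : j * 49023 ^ n ≤ 49023 ^ (n+1) := by rw [pow_succ']; exact Nat.mul_le_mul_right _ (by omega)
    omega
  simp only [al, e, W_apply] at this
  simpa using this

theorem excl {X : ℕ → Conf} (hX : Ch X) (n : ℕ) : ∀ (c1 c2 : ℤ) (τ1 τ2 : ℕ), V X n c1 τ1 → V X n c2 τ2 → c1 ≤ c2 → c2 < c1 + 7000 ^ n →
    2 * ((τ1 : ℤ) - τ2) ≤ 49023 ^ n → 2 * ((τ2 : ℤ) - τ1) ≤ 49023 ^ n → 2 * 49023 ^ n ≤ τ1 → 2 * 49023 ^ n ≤ τ2 →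
    c1 = c2 ∧ τ1 = τ2 := by
  induction n with
  | zero => intro c1 c2 τ1 τ2 _ _ h1 h2 h3 h4 _ _; simp at *; omega
  | succ n ih =>
    intro c1 c2 τ1 τ2 v1 v2 h1 h2 h3 h4 h5 h6
    obtain ⟨a, ha⟩ : ∃ a : ℤ, a = 7000 ^ n := ⟨_, rfl⟩
    obtain ⟨b, hb⟩ : ∃ b : ℕ, b = 49023 ^ n := ⟨_, rfl⟩
    have hbz : (b : ℤ) = 49023 ^ n := by rw [hb]; push_cast; rfl
    have ha0 : 0 < a := by rw [ha]; positivity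
    have hb0 : 0 < b := by rw [hb]; positivity
    rw [pow_succ, ← ha] at h2
    rw [pow_succ, ← hbz] at h3 h4
    have s1 := fun {j} => lev_sphase hX (n := n) (j := j) (by omega) v1
    have s2 := fun {j} => lev_sphase hX (n := n) (j := j) (by omega) v2
    rw [pow_succ, ← hb] at h5 h6
    simp only [← ha, ← hb] at s1 s2
    rw [← hb, ← hbz, ← ha] at ih
    -- column
    obtain ⟨J, hJ⟩ : ∃ J, J = (c2 - c1) / a := ⟨_, rfl⟩
    have hJ1 : a * J ≤ c2 - c1 := by rw [hJ]; exact Int.mul_ediv_self_le ha0.ne'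
    have hJ2 : c2 - c1 < a * J + a := by rw [hJ]; exact Int.lt_mul_ediv_self_add ha0
    have hJ3 : 0 ≤ J := by rw [hJ]; exact Int.ediv_nonneg (by omega) ha0.le
    have hJ4 : J ≤ 6999 := by
      by_contra hcon
      have : a * 7000 ≤ a * J := mul_le_mul_of_nonneg_left (by omega) ha0.le
      omega
    -- time offset
    obtain ⟨k, hk⟩ : ∃ k, k = (2 * ((τ1 : ℤ) - τ2) + b) / (2 * b) := ⟨_, rfl⟩
    have hk1 : 2 * b * k ≤ 2 * ((τ1 : ℤ) - τ2) + b := by rw [hk]; exact Int.mul_ediv_self_le (by omega)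
    have hk2 : 2 * ((τ1 : ℤ) - τ2) + b < 2 * b * k + 2 * b := by rw [hk]; exact Int.lt_mul_ediv_self_add (by omega)
    have hk3 : k ≤ 24512 := by
      by_contra hcon
      have : (2 * (b:ℤ)) * 24513 ≤ 2 * b * k := mul_le_mul_of_nonneg_left (by omega) (by omega)
      omega
    have hk4 : -24512 ≤ k := by
      by_contra hcon
      have : 2 * b * k ≤ (2 * (b:ℤ)) * (-24513) := mul_le_mul_of_nonneg_left (by omega) (by omega)
      omega
    -- generic step
    have fin : ∀ j i : ℕ, j ≤ 41988 → i ≤ 41988 → (j : ℤ) - i = k →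
        (∃ v, W X n (c1 + a * J) (τ1 - j * b) = some (slot J (49023 - j), v)) → c1 = c2 ∧ τ1 = τ2 := by
      rintro j i hj hi hji ⟨v, hv⟩
      obtain ⟨⟨w, hw⟩, -⟩ := s2 hi
      have hjb : j * b ≤ 41988 * b := Nat.mul_le_mul_right _ hj
      have hib : i * b ≤ 41988 * b := Nat.mul_le_mul_right _ hi
      have hkb : (j : ℤ) * b - i * b = b * k := by rw [← hji]; ring
      have hk5 : 2 * b * k = 2 * ((b:ℤ) * k) := by ring
      rw [hk5] at hk1 hk2
      have e1 : ((τ1 - j * b : ℕ) : ℤ) = τ1 - j * b := by push_cast [Nat.cast_sub (show j * b ≤ τ1 by omega)]; ring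
      have e2 : ((τ2 - i * b : ℕ) : ℤ) = τ2 - i * b := by push_cast [Nat.cast_sub (show i * b ≤ τ2 by omega)]; ring
      obtain ⟨q1, q2⟩ := ih (c1 + a * J) c2 (τ1 - j * b) (τ2 - i * b) (by unfold V; rw [hv]; simp) (by unfold V; rw [hw]; simp)
        (by omega) (by omega) (by omega) (by omega) (by omega) (by omega)
      rw [q1, q2, hw] at hv
      simp [slot] at hv
      obtain ⟨⟨r1, r2⟩, -⟩ := hv
      have hJ0 : J = 0 := by
        have : (0 : ℤ) = (J : ZMod 7000) := by simpa using r1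
        obtain ⟨q, hq⟩ := cast_iff.1 this
        omega
      have hij : i = j := by
        have := (ZMod.natCast_eq_natCast_iff _ _ _).1 r2
        unfold Nat.ModEq at this
        omega
      subst hJ0 hij
      constructor
      · omega
      · omega
    by_cases hJ0 : J = 0
    · rcases le_total 0 k with hk0 | hk0
      · refine fin k.toNat 0 (by omega) (by omega) (by omega) ?_
        obtain ⟨⟨v, hv⟩, -⟩ := s1 (j := k.toNat) (by omega)
        rw [hJ0]; exact ⟨v, by simpa using hv⟩
      · refine fin 0 (-k).toNat (by omega) (by omega) (by omega) ?_
        obtain ⟨⟨v, hv⟩, -⟩ := s1 (j := 0) (by omega)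
        rw [hJ0]; exact ⟨v, by simpa using hv⟩
    · obtain ⟨j, hj1, hj2, hj3, hj4⟩ : ∃ j : ℕ, j ≤ 41988 ∧ k ≤ j ∧ (j : ℤ) - k ≤ 41988 ∧ zz (41988 - j) = J := by
        -- choose m = 41988 - j in a window of 13996 consecutive values
        obtain ⟨w, hw⟩ : ∃ w : ℤ, w = max 0 (-k) := ⟨_, rfl⟩
        refine ⟨(41988 - (w + (J - 7 - w) % 13996)).toNat, by omega, by omega, by omega, ?_⟩
        unfold zz
        split_ifs <;> omega
      refine fin j ((j : ℤ) - k).toNat hj1 (by omega) (by omega) ?_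
      obtain ⟨-, v, hv⟩ := s1 (j := j) (by omega)
      rw [hj4] at hv
      exact ⟨v, hv⟩
end
end UE

namespace UE

structure Prm where
  A : ℤ
  B : ℤ
  g0 : ℤ
  u : ℤ
  w : ℤ
  H : ℤ
  hA : 0 < A
  hB : 0 ≤ B
  hAB : 14 * B ≤ A

def Prm.Z (P : Prm) (n : ℕ) (c : ℤ) (τ : ℕ) : Prop :=
  P.A * τ - P.B * c - P.g0 ≤ 5 * (P.A * 49023 ^ n) ∧ -(5 * (P.A * 49023 ^ n)) ≤ P.A * τ - P.B * c - P.g0 ∧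
  P.u - 10 * 7000 ^ n ≤ c ∧ c ≤ P.w + 10 * 7000 ^ n ∧ P.H - 2 * 49023 ^ n ≤ τ

theorem pos_step' (i t d) : pos i (t+d) - pos i t ≤ 7 * d ∧ -(7 * (d:ℤ)) ≤ pos i (t+d) - pos i t := by
  induction d with
  | zero => simp
  | succ d ih =>
    have := pos_step i (t + d)
    rw [← add_assoc]
    push_cast
    omega

theorem NU (n : ℕ) : (7000 : ℤ) ^ n ≤ 49023 ^ n := pow_le_pow_left₀ (by norm_num) (by norm_num) n

theorem Z_owner (P : Prm) {n c τ i} {t : ℕ} (h : P.Z n c τ) (ht : t ≤ 49024) (hle : t * 49023 ^ n ≤ τ) :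
    P.Z (n+1) (c - 7000 ^ n * pos i t) (τ - t * 49023 ^ n) := by
  obtain ⟨h1, h2, h3, h4, h5⟩ := h
  have e : ((τ - t * 49023 ^ n : ℕ) : ℤ) = τ - t * 49023 ^ n := by push_cast [Nat.cast_sub hle]; ring
  obtain ⟨A, B, g0, u, w, H, hA, hB, hAB⟩ := P
  unfold Prm.Z
  rw [e]
  have hN := NU n
  simp only at h1 h2 h3 h4 h5 ⊢
  obtain ⟨a, ha⟩ : ∃ a : ℤ, a = 7000 ^ n := ⟨_, rfl⟩
  obtain ⟨b, hb⟩ : ∃ b : ℤ, b = 49023 ^ n := ⟨_, rfl⟩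
  have ha0 : 0 < a := by rw [ha]; positivity
  have hb0 : 0 < b := by rw [hb]; positivity
  rw [pow_succ, pow_succ, ← ha, ← hb]
  simp only [← ha, ← hb] at h1 h2 h3 h4 h5 hN
  obtain ⟨q, hq⟩ : ∃ q, q = pos i t := ⟨_, rfl⟩
  have hp := pos_bd i t
  rw [← hq] at hp ⊢
  have t0 : (0:ℤ) ≤ t := by omega
  have t1 : (t:ℤ) ≤ 49024 := by omega
  have m1 : a * q ≤ a * 63000 := mul_le_mul_of_nonneg_left hp.2 ha0.le
  have m2 : a * (-63000) ≤ a * q := mul_le_mul_of_nonneg_left hp.1 ha0.le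
  have m3 : (t:ℤ) * b ≤ 49024 * b := mul_le_mul_of_nonneg_right t1 hb0.le
  have m4 : (0:ℤ) ≤ t * b := by positivity
  have m5 : A * (t * b) ≤ A * (49024 * b) := mul_le_mul_of_nonneg_left m3 hA.le
  have m6 : 0 ≤ A * (t * b) := by positivity
  have m7 : B * (a * q) ≤ B * (a * 63000) := mul_le_mul_of_nonneg_left m1 hB
  have m8 : B * (a * (-63000)) ≤ B * (a * q) := mul_le_mul_of_nonneg_left m2 hB
  have m9 : B * a ≤ B * b := mul_le_mul_of_nonneg_left hN hB
  have m10 : 14 * B * b ≤ A * b := mul_le_mul_of_nonneg_right hAB hb0.le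
  have e1 : A * (τ - t * b) - B * (c - a * q) - g0 = (A * τ - B * c - g0) - A * (t * b) + B * (a * q) := by ring
  rw [e1]
  have m11 : 0 < A * b := by positivity
  refine ⟨?_, ?_, by linarith, by linarith, by linarith⟩ <;> nlinarith

theorem Z_fiber (P : Prm) {n c τ i} {t d : ℕ} (h1 : P.Z n (c + 7000 ^ n * pos i t) (τ + t * 49023 ^ n))
    (h2 : P.Z n (c + 7000 ^ n * pos i (t + d)) (τ + (t + d) * 49023 ^ n)) : d ≤ 20 := by
  obtain ⟨-, h1, -⟩ := h1
  obtain ⟨h2, -⟩ := h2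
  obtain ⟨A, B, g0, u, w, H, hA, hB, hAB⟩ := P
  have hN := NU n
  push_cast at h1 h2
  obtain ⟨a, ha⟩ : ∃ a : ℤ, a = 7000 ^ n := ⟨_, rfl⟩
  obtain ⟨b, hb⟩ : ∃ b : ℤ, b = 49023 ^ n := ⟨_, rfl⟩
  have ha0 : 0 < a := by rw [ha]; positivity
  have hb0 : 0 < b := by rw [hb]; positivity
  simp only [← ha, ← hb] at h1 h2 hN
  have hp := (pos_step' i t d).1
  obtain ⟨q, hq⟩ : ∃ q, q = pos i t := ⟨_, rfl⟩
  obtain ⟨q', hq'⟩ : ∃ q', q' = pos i (t + d) := ⟨_, rfl⟩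
  simp only [← hq, ← hq'] at h1 h2 hp
  by_contra hd
  have hd' : (21 : ℤ) ≤ d := by omega
  have m1 : a * (q' - q) ≤ a * (7 * d) := mul_le_mul_of_nonneg_left hp ha0.le
  have m2 : a * (7 * d) ≤ b * (7 * d) := mul_le_mul_of_nonneg_right hN (by positivity)
  have m3 : B * (a * (q' - q)) ≤ B * (b * (7 * d)) := mul_le_mul_of_nonneg_left (m1.trans m2) hB
  have m4 : 14 * B * (b * d) ≤ A * (b * d) := mul_le_mul_of_nonneg_right hAB (by positivity)
  have m5 : A * b * 21 ≤ A * b * d := mul_le_mul_of_nonneg_left hd' (by positivity)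
  have m6 : 0 < A * b := by positivity
  nlinarith


theorem count_step {X : ℕ → Conf} (hX : Ch X) (P : Prm) {n : ℕ} (hH : 4 * 49023 ^ (n+1) ≤ P.H) (F : Finset (ℤ × ℕ))
    (hF : ∀ p ∈ F, V X n p.1 p.2 ∧ P.Z n p.1 p.2) :
    ∃ F' : Finset (ℤ × ℕ), (∀ p ∈ F', V X (n+1) p.1 p.2 ∧ P.Z (n+1) p.1 p.2) ∧ F.card ≤ 4557 * F'.card := by
  classical
  have hbig : ∀ p ∈ F, 2 * 49023 ^ (n+1) ≤ p.2 := by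
    intro p hp
    have h := (hF p hp).2.2.2.2.2
    have : (49023 : ℤ) ^ n ≤ 49023 ^ (n+1) := pow_le_pow_right₀ (by norm_num) (by omega)
    have h' : (2 * 49023 ^ (n+1) : ℤ) ≤ (p.2 : ℤ) := by linarith
    exact_mod_cast h'
  have hex : ∀ p : ℤ × ℕ, ∃ q : Idx × ℕ, p ∈ F → (q.2 ≤ 49024 ∧
      V X (n+1) (p.1 - 7000 ^ n * pos q.1 q.2) (p.2 - q.2 * 49023 ^ n)) := by
    intro p
    by_cases hp : p ∈ F
    · obtain ⟨i, t, h1, h2⟩ := lev_owner hX (hbig p hp) (hF p hp).1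
      exact ⟨(i, t), fun _ => ⟨h1, h2⟩⟩
    · exact ⟨(0, 0), fun h => absurd h hp⟩
  choose f hf using hex
  have hle : ∀ p ∈ F, (f p).2 * 49023 ^ n ≤ p.2 := by
    intro p hp
    calc (f p).2 * 49023 ^ n ≤ (2 * 49023) * 49023 ^ n := Nat.mul_le_mul_right _ (by have := (hf p hp).1; omega)
      _ = 2 * 49023 ^ (n+1) := by ring
      _ ≤ p.2 := hbig p hp
  let g : ℤ × ℕ → ℤ × ℕ := fun p => (p.1 - 7000 ^ n * pos (f p).1 (f p).2, p.2 - (f p).2 * 49023 ^ n)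
  let k : ℤ × ℕ → Idx × (ℤ × ℕ) := fun p => ((f p).1, g p)
  have c1 : F.card ≤ 21 * (F.image k).card := by
    apply Finset.card_le_mul_card_image
    intro a ha
    -- the fibre over a
    let S := F.filter fun p => k p = a
    show S.card ≤ 21
    by_cases hne : S.Nonempty
    · obtain ⟨p0, hp0, hmin⟩ := S.exists_min_image (fun p => (f p).2) hne
      have hrec : ∀ p ∈ S, (f p).1 = a.1 ∧ p.1 = a.2.1 + 7000 ^ n * pos a.1 (f p).2 ∧
          p.2 = a.2.2 + (f p).2 * 49023 ^ n := by
        intro p hp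
        obtain ⟨hp1, hp2⟩ := Finset.mem_filter.1 hp
        have e := hle p hp1
        subst hp2
        refine ⟨rfl, ?_, ?_⟩
        · show p.1 = p.1 - 7000 ^ n * pos (f p).1 (f p).2 + 7000 ^ n * pos (f p).1 (f p).2; ring
        · show p.2 = p.2 - (f p).2 * 49023 ^ n + (f p).2 * 49023 ^ n; omega
      have : S.card ≤ (Finset.Icc (f p0).2 ((f p0).2 + 20)).card := by
        apply Finset.card_le_card_of_injOn (fun p => (f p).2)
        · intro p hp
          have hp' : p ∈ S := hp
          have hm := hmin p hp'
          obtain ⟨r1, r2, r3⟩ := hrec p hp'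
          obtain ⟨s1, s2, s3⟩ := hrec p0 hp0
          obtain ⟨d, hd⟩ : ∃ d, (f p).2 = (f p0).2 + d := ⟨(f p).2 - (f p0).2, by omega⟩
          have z1 := (hF p (Finset.mem_filter.1 hp').1).2
          have z0 := (hF p0 (Finset.mem_filter.1 hp0).1).2
          rw [r2, r3, hd] at z1
          rw [s2, s3] at z0
          have := Z_fiber P z0 z1
          simp only [Finset.coe_Icc, Set.mem_Icc]
          omega
        · intro p hp q hq hpq
          obtain ⟨r1, r2, r3⟩ := hrec p hp
          obtain ⟨s1, s2, s3⟩ := hrec q hq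
          simp only at hpq
          rw [hpq] at r2 r3
          exact Prod.ext (r2.trans s2.symm) (r3.trans s3.symm)
      rw [Nat.card_Icc] at this; omega
    · rw [Finset.not_nonempty_iff_eq_empty] at hne
      rw [hne]; simp
  have c2 : (F.image k).card ≤ 217 * (F.image g).card := by
    have : F.image k ⊆ (Finset.univ : Finset Idx) ×ˢ (F.image g) := by
      intro a ha
      obtain ⟨p, hp, rfl⟩ := Finset.mem_image.1 ha
      exact Finset.mem_product.2 ⟨Finset.mem_univ _, Finset.mem_image_of_mem g hp⟩
    refine (Finset.card_le_card this).trans ?_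
    rw [Finset.card_product]
    simp [Idx]
  refine ⟨F.image g, ?_, by omega⟩
  intro q hq
  obtain ⟨p, hp, rfl⟩ := Finset.mem_image.1 hq
  exact ⟨(hf p hp).2, Z_owner P (hF p hp).2 (hf p hp).1 (hle p hp)⟩

theorem count_iter {X : ℕ → Conf} (hX : Ch X) (P : Prm) {M : ℕ} (hH : 4 * 49023 ^ (M+1) ≤ P.H) (F : Finset (ℤ × ℕ))
    (hF : ∀ p ∈ F, V X 0 p.1 p.2 ∧ P.Z 0 p.1 p.2) {n : ℕ} (hn : n ≤ M) :
    ∃ F' : Finset (ℤ × ℕ), (∀ p ∈ F', V X n p.1 p.2 ∧ P.Z n p.1 p.2) ∧ F.card ≤ 4557 ^ n * F'.card := by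
  induction n with
  | zero => exact ⟨F, hF, by simp⟩
  | succ n ih =>
    obtain ⟨F1, h1, h2⟩ := ih (by omega)
    have : (49023 : ℤ) ^ (n+1) ≤ 49023 ^ (M+1) := pow_le_pow_right₀ (by norm_num) (by omega)
    obtain ⟨F2, h3, h4⟩ := count_step hX P (n := n) (by linarith) F1 h1
    refine ⟨F2, h3, h2.trans ?_⟩
    rw [pow_succ, mul_assoc]
    exact Nat.mul_le_mul_left _ h4

theorem count_top {X : ℕ → Conf} (hX : Ch X) (P : Prm) {n : ℕ} (hH : 4 * 49023 ^ (n+1) ≤ P.H) (huw : P.u ≤ P.w)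
    (hBw : P.B * (P.w - P.u) ≤ P.A * 49023 ^ n) (F : Finset (ℤ × ℕ))
    (hF : ∀ p ∈ F, V X n p.1 p.2 ∧ P.Z n p.1 p.2) :
    (F.card : ℤ) ≤ 28 * ((P.w - P.u) / 7000 ^ n + 22) := by
  have hN := NU n
  have hbig : ∀ p ∈ F, 2 * 49023 ^ n ≤ p.2 := by
    intro p hp
    have h := (hF p hp).2.2.2.2.2
    have : (49023 : ℤ) ^ n ≤ 49023 ^ (n+1) := pow_le_pow_right₀ (by norm_num) (by omega)
    have h' : (2 * 49023 ^ n : ℤ) ≤ (p.2 : ℤ) := by linarith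
    exact_mod_cast h'
  have hexc := excl hX n
  obtain ⟨A, B, g0, u, w, H, hA, hB, hAB⟩ := P
  simp only [Prm.Z] at *
  obtain ⟨a, ha⟩ : ∃ a : ℤ, a = 7000 ^ n := ⟨_, rfl⟩
  obtain ⟨b, hb⟩ : ∃ b : ℤ, b = 49023 ^ n := ⟨_, rfl⟩
  have ha0 : 0 < a := by rw [ha]; positivity
  have hb0 : 0 < b := by rw [hb]; positivity
  simp only [← ha, ← hb] at *
  let k : ℤ × ℕ → ℤ × ℤ := fun p => ((p.1 - (u - 10 * a)) / a, 2 * (p.2 : ℤ) / b)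
  -- time range
  obtain ⟨s, hs⟩ : ∃ s : ℤ, s = (g0 + B * (u - 10 * a)) / A := ⟨_, rfl⟩
  have hs1 : A * s ≤ g0 + B * (u - 10 * a) := by rw [hs]; exact Int.mul_ediv_self_le hA.ne'
  have hs2 : g0 + B * (u - 10 * a) < A * s + A := by rw [hs]; exact Int.lt_mul_ediv_self_add hA
  have hτ : ∀ p ∈ F, s - 5 * b ≤ p.2 ∧ (p.2 : ℤ) ≤ s + 8 * b := by
    intro p hp
    obtain ⟨_, h1, h2, h3, h4, _⟩ := hF p hp
    have m1 : B * (u - 10 * a) ≤ B * p.1 := mul_le_mul_of_nonneg_left h3 hB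
    have m2 : B * p.1 ≤ B * (w + 10 * a) := mul_le_mul_of_nonneg_left h4 hB
    have m3 : B * a ≤ B * b := mul_le_mul_of_nonneg_left hN hB
    have m4 : 14 * B * b ≤ A * b := mul_le_mul_of_nonneg_right hAB hb0.le
    have m5 : A * 1 ≤ A * b := mul_le_mul_of_nonneg_left (by omega) hA.le
    constructor
    · by_contra hcon
      have : A * p.2 ≤ A * (s - 5 * b - 1) := mul_le_mul_of_nonneg_left (by omega) hA.le
      nlinarith
    · by_contra hcon
      have : A * (s + 8 * b + 1) ≤ A * p.2 := mul_le_mul_of_nonneg_left (by omega) hA.le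
      nlinarith
  obtain ⟨s', hs'⟩ : ∃ s' : ℤ, s' = 2 * s / b := ⟨_, rfl⟩
  have hs3 : b * s' ≤ 2 * s := by rw [hs']; exact Int.mul_ediv_self_le hb0.ne'
  have hs4 : 2 * s < b * s' + b := by rw [hs']; exact Int.lt_mul_ediv_self_add hb0
  have hcard : F.card ≤ ((Finset.Icc (0:ℤ) ((w - u) / a + 21)) ×ˢ (Finset.Icc (s' - 10) (s' + 17))).card := by
    apply Finset.card_le_card_of_injOn k
    · intro p hp
      have hp' : p ∈ F := hp
      obtain ⟨_, h1, h2, h3, h4, _⟩ := hF p hp'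
      obtain ⟨t1, t2⟩ := hτ p hp'
      simp only [k, Finset.coe_product, Finset.coe_Icc, Set.mem_prod, Set.mem_Icc]
      refine ⟨⟨Int.ediv_nonneg (by omega) ha0.le, ?_⟩, ?_, ?_⟩
      · have e : (w - u) / a + 21 = (w - u + 21 * a) / a := by
          rw [Int.add_mul_ediv_right _ _ ha0.ne']
        rw [e]
        exact Int.ediv_le_ediv ha0 (by linarith)
      · rw [Int.le_ediv_iff_mul_le hb0]
        nlinarith
      · apply Int.le_of_lt_add_one
        rw [Int.ediv_lt_iff_lt_mul hb0]
        nlinarith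
    · intro p hp q hq hpq
      simp only [k, Prod.mk.injEq] at hpq
      obtain ⟨e1, e2⟩ := hpq
      have a1 := Int.mul_ediv_self_le (x := p.1 - (u - 10 * a)) ha0.ne'
      have a2 := Int.lt_mul_ediv_self_add (x := p.1 - (u - 10 * a)) ha0
      have a3 := Int.mul_ediv_self_le (x := q.1 - (u - 10 * a)) ha0.ne'
      have a4 := Int.lt_mul_ediv_self_add (x := q.1 - (u - 10 * a)) ha0
      have b1 := Int.mul_ediv_self_le (x := 2 * (p.2:ℤ)) hb0.ne'
      have b2 := Int.lt_mul_ediv_self_add (x := 2 * (p.2:ℤ)) hb0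
      have b3 := Int.mul_ediv_self_le (x := 2 * (q.2:ℤ)) hb0.ne'
      have b4 := Int.lt_mul_ediv_self_add (x := 2 * (q.2:ℤ)) hb0
      rw [e1] at a1 a2
      rw [e2] at b1 b2
      rcases le_total p.1 q.1 with h | h
      · obtain ⟨r1, r2⟩ := hexc p.1 q.1 p.2 q.2 (hF p hp).1 (hF q hq).1 h (by linarith) (by linarith) (by linarith)
          (hbig p hp) (hbig q hq)
        exact Prod.ext r1 r2
      · obtain ⟨r1, r2⟩ := hexc q.1 p.1 q.2 p.2 (hF q hq).1 (hF p hp).1 h (by linarith) (by linarith) (by linarith)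
          (hbig q hq) (hbig p hp)
        exact Prod.ext r1.symm r2.symm
  rw [Finset.card_product, Int.card_Icc, Int.card_Icc] at hcard
  have hq : 0 ≤ (w - u) / a := Int.ediv_nonneg (by omega) ha0.le
  have e1 : (s' + 17 + 1 - (s' - 10)).toNat = 28 := by omega
  rw [e1] at hcard
  have : (F.card : ℤ) ≤ (((w - u) / a + 21 + 1 - 0).toNat * 28 : ℕ) := by exact_mod_cast hcard
  push_cast at this
  omega

theorem count_final {X : ℕ → Conf} (hX : Ch X) (P : Prm) {n : ℕ} (hH : 4 * 49023 ^ (n+1) ≤ P.H) (huw : P.u ≤ P.w)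
    (hBw : P.B * (P.w - P.u) ≤ P.A * 49023 ^ n) (F : Finset (ℤ × ℕ))
    (hF : ∀ p ∈ F, X p.2 p.1 ≠ none ∧ P.A * p.2 - P.B * p.1 - P.g0 = 0 ∧ P.u ≤ p.1 ∧ p.1 ≤ P.w ∧ P.H ≤ p.2) :
    (F.card : ℤ) ≤ 4557 ^ n * (28 * ((P.w - P.u) / 7000 ^ n + 22)) := by
  have hA := P.hA
  obtain ⟨F', h1, h2⟩ := count_iter hX P hH F (fun p hp => by
    obtain ⟨h1, h2, h3, h4, h5⟩ := hF p hp
    refine ⟨?_, ?_⟩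
    · simpa [V, W, shf] using h1
    · simp only [Prm.Z, h2, pow_zero]
      refine ⟨by omega, by omega, by omega, by omega, by omega⟩) (le_refl n)
  have h3 := count_top hX P hH huw hBw F' h1
  have h4 : (F.card : ℤ) ≤ 4557 ^ n * F'.card := by exact_mod_cast h2
  exact h4.trans (mul_le_mul_of_nonneg_left h3 (by positivity))

end UE

namespace UE

def xE (x : Conf) : Env where
  PP J v := al x 0 (7000 * J) v
  MM J v := al x 0 (7000 * J + 7) v
  PB J v := ∃ l, (chE (fun _ => x)).IN l J v

theorem xE_Pl (x) : (xE x).Pl := by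
  rintro J v ⟨l, h⟩; exact IN_plain h

theorem xE_PB (x J v) : (xE x).PB J v ↔ ∃ l, (xE x).IN l J v := Iff.rfl

def Form (x : Conf) : Prop := ∀ c s, x c = some s → s.1 = slot c 0 ∧ ∃ J : ℤ, c = 7000 * J ∨ c = 7000 * J + 7

def Al (y : Conf) : Prop := ∃ a : Slot, ∀ J s, y J = some s → s.1 = a + ((J : ZMod 7000), 0)

def CF (y : Conf) : Prop := ∀ J s s', Pushed y J s → Pushed y J s' → s = s'

theorem Al_pushed {y : Conf} {a : Slot} (h : ∀ J s, y J = some s → s.1 = a + ((J : ZMod 7000), 0)) {J s}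
    (hs : Pushed y J s) : s.1 = a + (0, 1) + ((J : ZMod 7000), 0) := by
  rcases hs with ⟨l, hl, p, m, hx, hp, hs⟩ | ⟨p, q, m1, m2, h1, h2, h3, h4, h5, h6, h7⟩
  · have := h _ _ hx
    simp only at this
    rw [hs, this]
    ext <;> simp [sh, add_assoc]
  · have := h _ _ h2
    simp only at this
    rw [h7, this]
    ext <;> simp [sh, add_assoc]

theorem Al_Phi {y} (h : Al y) : Al (Phi y) := by
  obtain ⟨a, h⟩ := h
  exact ⟨a + (0, 1), fun J s hs => Al_pushed h (Phi_eq.1 hs).1⟩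

section
variable {x : Conf}

theorem S0_al (hF : Form x) (c v) : al x 0 c v ↔ (xE x).St 0 c v := by
  rw [Env.St_0]
  constructor
  · intro h
    obtain ⟨_, J, rfl | rfl⟩ := hF _ _ h
    · exact ⟨J, Or.inl ⟨rfl, h⟩⟩
    · exact ⟨J, Or.inr ⟨rfl, h⟩⟩
  · rintro ⟨J, ⟨rfl, h⟩ | ⟨rfl, h⟩⟩ <;> exact h

theorem xE_PP_fun {J v v'} (h : (xE x).PP J v) (h' : (xE x).PP J v') : v = v' := al_uniq h h'
theorem xE_MM_fun {J v v'} (h : (xE x).MM J v) (h' : (xE x).MM J v') : v = v' := al_uniq h h'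

theorem xE_dec {J p m} (h : (xE x).SP J (.plain p)) (h' : (xE x).SM J m) :
    dec x J = some (p, m) := chE_dec (x := fun _ => x) h h'

theorem xE_SP_fun {J v v'} (h : (xE x).SP J v) (h' : (xE x).SP J v') : v = v' := by
  obtain ⟨p, m, rfl, h1, h2⟩ := h
  obtain ⟨p', m', rfl, h1', h2'⟩ := h'
  exact xE_PP_fun h1 h1'

theorem xE_SM_fun {J v v'} (h : (xE x).SM J v) (h' : (xE x).SM J v') : v = v' := by
  obtain ⟨p, h1, h2⟩ := h
  obtain ⟨p', h1', h2'⟩ := h'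
  exact xE_MM_fun h2 h2'

theorem xE_SP_al {a : Slot} (hA : ∀ J s, dec x J = some s → s.1 = a + ((J : ZMod 7000), 0)) {J p}
    (h : (xE x).SP J (.plain p)) : p = a + ((J : ZMod 7000), 0) := by
  obtain ⟨p', m, e, h1, h2⟩ := h
  cases e
  exact hA J _ (dec_al.2 ⟨h1, h2⟩)

theorem xE_IN_al {a : Slot} (hA : ∀ J s, dec x J = some s → s.1 = a + ((J : ZMod 7000), 0)) {l J v}
    (h : (xE x).IN l J v) : v = .plain (a + (0, 1) + ((J : ZMod 7000), 0)) := by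
  obtain ⟨p, h1, rfl⟩ := h
  rw [xE_SP_al hA h1]
  congr 1
  ext <;> simp [sh, add_assoc]

theorem xE_PB_al {a : Slot} (hA : ∀ J s, dec x J = some s → s.1 = a + ((J : ZMod 7000), 0)) {J v}
    (h : (xE x).PB J v) : v = .plain (a + (0, 1) + ((J : ZMod 7000), 0)) := by
  obtain ⟨l, h⟩ := h
  exact xE_IN_al hA h

theorem xE_MF_fun {l J v v'} (h : (xE x).MF l J v) (h' : (xE x).MF l J v') : v = v' := by
  obtain ⟨p, m, h1, h2, h3, h4⟩ := h
  obtain ⟨p', m', h1', h2', h3', h4'⟩ := h'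
  have e := xE_SP_fun h2 h2'
  cases e
  cases xE_SM_fun h3 h3'
  rw [h4] at h4'
  exact Option.some.inj h4'

theorem xE_TA_fun {l J v v'} (h : (xE x).TA l J v) (h' : (xE x).TA l J v') : v = v' := by
  obtain ⟨p, h1, h2, rfl⟩ := h
  obtain ⟨p', h1', h2', rfl⟩ := h'
  cases xE_SP_fun h2 h2'
  rfl

theorem FM_pushed {a : Slot} (hA : ∀ J s, dec x J = some s → s.1 = a + ((J : ZMod 7000), 0)) {l J v}
    (h : (xE x).FM l J v) : Pushed (dec x) J (a + (0, 1) + ((J : ZMod 7000), 0), v) := by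
  rcases h with ⟨hl, p, m, q1, q2, q3, q4⟩ | ⟨rfl, v1, v2, ⟨p, m, q1, q2, q3, q4⟩, ⟨p0, m0, r1, r2, r3, r4⟩, hG⟩
  · left
    refine ⟨l, hl, p, m, xE_dec q2 q3, ?_, ?_⟩
    · simpa [Psi, hl] using q4
    · have := xE_PB_al hA q1
      simp only [Dat.plain.injEq] at this
      exact this.symm
  · right
    have e5 : dl 5 = 7 := by simp [dl]
    have e6 : dl 6 = 0 := by simp [dl]
    rw [e5] at q1 q2 q3
    rw [e6] at r1 r2 r3
    rw [sub_zero] at r2 r3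
    simp [Psi] at q4 r4
    obtain ⟨hb, rfl⟩ := q4
    obtain ⟨hb', rfl⟩ := r4
    refine ⟨p, p0, m, m0, xE_dec q2 q3, xE_dec r2 r3, hb, hb', ?_, hG, ?_⟩
    · rw [xE_SP_al hA q2, xE_SP_al hA r2]
      ext <;> simp [seven]; ring
    · have := xE_PB_al hA r1
      simp only [Dat.plain.injEq] at this
      exact this.symm

theorem xE_of_dec {J p m} (h : dec x J = some (p, m)) : (xE x).SP J (.plain p) ∧ (xE x).SM J m := by
  rw [dec_al] at h
  exact ⟨⟨p, m, rfl, h.1, h.2⟩, ⟨p, h.1, h.2⟩⟩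

theorem xE_PB_of {l J p} (h : (xE x).SP (J - dl l) (.plain p)) : (xE x).PB J (.plain (sh p (dl l))) :=
  ⟨l, p, h, rfl⟩

theorem pushed_FM {J s} (h : Pushed (dec x) J s) : (xE x).PB J (.plain s.1) ∧ ∃ l, (xE x).FM l J s.2 := by
  rcases h with ⟨l, hl, p, m, hx, hp, hs⟩ | ⟨p, q, m1, m2, h1, h2, h3, h4, h5, h6, h7⟩
  · obtain ⟨k1, k2⟩ := xE_of_dec hx
    have k3 := xE_PB_of k1
    refine ⟨by rw [hs]; exact k3, l, Or.inl ⟨hl, p, m, k3, k1, k2, ?_⟩⟩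
    simpa [Psi, hl] using hp
  · have e5 : dl 5 = 7 := by simp [dl]
    have e6 : dl 6 = 0 := by simp [dl]
    obtain ⟨k1, k2⟩ := xE_of_dec h1
    obtain ⟨j1, j2⟩ := xE_of_dec h2
    have k1' : (xE x).SP (J - dl 5) (.plain p) := by rw [e5]; exact k1
    have k2' : (xE x).SM (J - dl 5) m1 := by rw [e5]; exact k2
    have j1' : (xE x).SP (J - dl 6) (.plain q) := by rw [e6, sub_zero]; exact j1
    have j2' : (xE x).SM (J - dl 6) m2 := by rw [e6, sub_zero]; exact j2
    have k3 := xE_PB_of k1'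
    have j3 := xE_PB_of j1'
    refine ⟨by rw [h7, ← e6]; exact j3, 6, Or.inr ⟨rfl, m1, m2, ⟨p, m1, k3, k1', k2', ?_⟩, ⟨q, m2, j3, j1', j2', ?_⟩, h6⟩⟩
    · simp [Psi, h3]
    · simp [Psi, h4]

theorem xE_FM_fun (hA : Al (dec x)) (hC : CF (dec x)) {l l' J v v'} (h : (xE x).FM l J v)
    (h' : (xE x).FM l' J v') : v = v' := by
  obtain ⟨a, hA⟩ := hA
  have := hC _ _ _ (FM_pushed hA h) (FM_pushed hA h')
  exact (Prod.mk.inj this).2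

theorem xE_PB_fun (hA : Al (dec x)) {J v v'} (h : (xE x).PB J v) (h' : (xE x).PB J v') : v = v' := by
  obtain ⟨a, hA⟩ := hA
  rw [xE_PB_al hA h, xE_PB_al hA h']

theorem xE_IN_fun (hA : Al (dec x)) {l l' J v v'} (h : (xE x).IN l J v) (h' : (xE x).IN l' J v') : v = v' :=
  xE_PB_fun hA ⟨l, h⟩ ⟨l', h'⟩

theorem xE_CM_fun (hA : Al (dec x)) {l J v v'} (h : (xE x).CM l J v) (h' : (xE x).CM l J v') : v = v' := by
  obtain ⟨p, h1, rfl⟩ := h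
  obtain ⟨p', h1', rfl⟩ := h'
  cases xE_PB_fun hA h1 h1'
  rfl

theorem rows_fun {c v v'} (h : (xE x).rows c v) (h' : (xE x).rows c v') : v = v' := by
  obtain ⟨J, l, ⟨hc, h⟩ | ⟨hc, h⟩⟩ := h <;> obtain ⟨J', l', ⟨hc', h'⟩ | ⟨hc', h'⟩⟩ := h' <;> try omega
  · obtain rfl : J = J' := by omega
    obtain rfl : l = l' := Fin.ext (by omega)
    exact xE_SP_fun h h'
  · obtain rfl : J = J' := by omega
    obtain rfl : l = l' := Fin.ext (by omega)
    exact xE_SM_fun h h'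

theorem pbm_fun (hA : Al (dec x)) {c v v'} (h : (xE x).pbm c v) (h' : (xE x).pbm c v') : v = v' := by
  obtain ⟨J, hc, h⟩ := h
  obtain ⟨J', hc', h'⟩ := h'
  obtain rfl : J = J' := by omega
  exact xE_PB_fun hA h h'

theorem St_fun (hA : Al (dec x)) (hC : CF (dec x)) {t c v v'} (h : (xE x).St t c v)
    (h' : (xE x).St t c v') : v = v' := by
  rcases Nat.lt_or_ge t 3 with h1 | h1
  · interval_cases t
    · rw [Env.St_0] at h h'
      obtain ⟨J, ⟨hc, h⟩ | ⟨hc, h⟩⟩ := h <;> obtain ⟨J', ⟨hc', h'⟩ | ⟨hc', h'⟩⟩ := h' <;> try omega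
      all_goals obtain rfl : J = J' := by omega
      · exact xE_PP_fun h h'
      · exact xE_MM_fun h h'
    · rw [Env.St_1] at h h'
      obtain ⟨J, ⟨hc, h⟩ | ⟨hc, h⟩ | ⟨hc, h⟩ | ⟨hc, h⟩⟩ := h <;>
        obtain ⟨J', ⟨hc', h'⟩ | ⟨hc', h'⟩ | ⟨hc', h'⟩ | ⟨hc', h'⟩⟩ := h' <;> try omega
      all_goals obtain rfl : J = J' := by omega
      · rw [h.1, h'.1]
      · obtain ⟨p, _, h⟩ := h
        obtain ⟨p', _, h'⟩ := h'
        exact xE_PP_fun h h'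
      · exact xE_MM_fun h h'
      · rw [h.1, h'.1]
    · rw [Env.St_2] at h h'
      obtain ⟨J, ⟨hc, h⟩ | ⟨hc, h⟩⟩ := h <;> obtain ⟨J', ⟨hc', h'⟩ | ⟨hc', h'⟩⟩ := h' <;> try omega
      all_goals obtain rfl : J = J' := by omega
      · exact xE_SM_fun h h'
      · exact xE_SP_fun h h'
  rcases Nat.lt_or_ge t 9 with h2 | h2
  · rw [Env.St_sp _ (by omega) (by omega)] at h h'
    obtain ⟨J, i, hi, ⟨hc, h⟩ | ⟨hc, h⟩⟩ := h <;> obtain ⟨J', i', hi', ⟨hc', h'⟩ | ⟨hc', h'⟩⟩ := h' <;> try omega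
    all_goals obtain rfl : J = J' := by omega
    · exact xE_SP_fun h h'
    · exact xE_SM_fun h h'
  rcases Nat.lt_or_ge t 7009 with h3 | h3
  · rw [Env.St_fl _ (by omega) (by omega)] at h h'
    obtain ⟨J, l, ⟨hc, h⟩ | ⟨hc, h⟩⟩ := h <;> obtain ⟨J', l', ⟨hc', h'⟩ | ⟨hc', h'⟩⟩ := h' <;>
      obtain rfl : l = l' := Fin.ext (by omega)
    · obtain rfl : J = J' := by omega
      exact xE_SP_fun h h'
    · omega
    · omega
    · obtain rfl : J = J' := by omega
      exact xE_SM_fun h h'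
  rcases Nat.lt_or_ge t 7010 with h4 | h4
  · obtain rfl : t = 7009 := by omega
    rw [Env.St_rows] at h h'
    exact rows_fun h h'
  rcases Nat.lt_or_ge t 7016 with h5 | h5
  · rw [Env.St_c0 _ (by omega) (by omega)] at h h'
    rcases h with h | ⟨J, l, hc, h⟩ <;> rcases h' with h' | ⟨J', l', hc', h'⟩
    · exact rows_fun h h'
    · obtain ⟨K, k1, k2⟩ := Env.rows_bd h; omega
    · obtain ⟨K, k1, k2⟩ := Env.rows_bd h'; omega
    · obtain rfl : J = J' := by omega
      exact xE_IN_fun hA h h'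
  rcases Nat.lt_or_ge t 7023 with h6 | h6
  · rw [Env.St_s0 _ (by omega) (by omega)] at h h'
    rcases h with h | ⟨J, l, hl, hc, h⟩ <;> rcases h' with h' | ⟨J', l', hl', hc', h'⟩
    · exact rows_fun h h'
    · obtain ⟨K, k1, k2⟩ := Env.rows_bd h; omega
    · obtain ⟨K, k1, k2⟩ := Env.rows_bd h'; omega
    · obtain rfl : J = J' := by omega
      exact xE_PB_fun hA h h'
  rcases Nat.lt_or_ge t 7028 with h7 | h7
  · interval_cases t
    · rw [Env.St_a] at h h'
      rcases h with h | h | ⟨J, l, hc, h⟩ <;> rcases h' with h' | h' | ⟨J', l', hc', h'⟩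
      · exact rows_fun h h'
      · obtain ⟨K, k1, k2⟩ := Env.rows_bd h
        obtain ⟨K', k3, _⟩ := h'
        omega
      · obtain ⟨K, k1, k2⟩ := Env.rows_bd h; omega
      · obtain ⟨K, k1, k2⟩ := Env.rows_bd h'
        obtain ⟨K', k3, _⟩ := h
        omega
      · exact pbm_fun hA h h'
      · obtain ⟨K', k3, _⟩ := h
        omega
      · obtain ⟨K, k1, k2⟩ := Env.rows_bd h'; omega
      · obtain ⟨K', k3, _⟩ := h'
        omega
      · obtain rfl : J = J' := by omega
        obtain rfl : l = l' := Fin.ext (by omega)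
        exact xE_CM_fun hA h h'
    · rw [Env.St_b] at h h'
      rcases h with h | ⟨J, l, h⟩ <;> rcases h' with h' | ⟨J', l', h'⟩
      · exact pbm_fun hA h h'
      · obtain ⟨K', k3, _⟩ := h
        omega
      · obtain ⟨K', k3, _⟩ := h'
        omega
      · rcases h with ⟨hc, h⟩ | ⟨hc, h⟩ <;> rcases h' with ⟨hc', h'⟩ | ⟨hc', h'⟩ <;> try omega
        all_goals obtain rfl : J = J' := by omega
        all_goals obtain rfl : l = l' := Fin.ext (by omega)
        · exact xE_TA_fun h h'
        · exact xE_SM_fun h h'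
    · rw [Env.St_c] at h h'
      rcases h with h | ⟨J, l, hc, h⟩ <;> rcases h' with h' | ⟨J', l', hc', h'⟩
      · exact pbm_fun hA h h'
      · obtain ⟨K', k3, _⟩ := h
        omega
      · obtain ⟨K', k3, _⟩ := h'
        omega
      · obtain rfl : J = J' := by omega
        obtain rfl : l = l' := Fin.ext (by omega)
        exact xE_MF_fun h h'
    all_goals
      first | rw [Env.St_d] at h h' | rw [Env.St_e] at h h'
      rcases h with h | ⟨J, h⟩ <;> rcases h' with h' | ⟨J', h'⟩
      · exact pbm_fun hA h h'
      · obtain ⟨K', k3, _⟩ := h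
        rcases h' with ⟨l, _, k, _⟩ | ⟨k, _⟩ <;> omega
      · obtain ⟨K', k3, _⟩ := h'
        rcases h with ⟨l, _, k, _⟩ | ⟨k, _⟩ <;> omega
      · rcases h with ⟨l, hl, hc, h⟩ | ⟨hc, h⟩ <;> rcases h' with ⟨l', hl', hc', h'⟩ | ⟨hc', h'⟩ <;> try omega
        · obtain rfl : J = J' := by omega
          obtain rfl : l = l' := Fin.ext (by omega)
          exact xE_MF_fun h h'
        · obtain rfl : J = J' := by omega
          exact xE_MF_fun h h'
  rcases Nat.lt_or_ge t 7035 with h8 | h8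
  · rw [Env.St_c2 _ (by omega) (by omega)] at h h'
    rcases h with h | ⟨J, l, hc, h⟩ <;> rcases h' with h' | ⟨J', l', hc', h'⟩
    · exact pbm_fun hA h h'
    · obtain ⟨K', k3, _⟩ := h
      omega
    · obtain ⟨K', k3, _⟩ := h'
      omega
    · obtain rfl : J = J' := by omega
      exact xE_FM_fun hA hC h h'
  · rw [Env.St_z _ (by omega)] at h h'
    have hz := Env.zz_bd (t - 7035)
    obtain ⟨J, ⟨hc, h⟩ | ⟨hc, l, h⟩⟩ := h <;> obtain ⟨J', ⟨hc', h'⟩ | ⟨hc', l', h'⟩⟩ := h' <;> try omega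
    all_goals obtain rfl : J = J' := by omega
    · exact xE_PB_fun hA h h'
    · exact xE_FM_fun hA hC h h'

theorem al_of_slot {z : Conf} {t : ℕ} (h : ∀ c s, z c = some s → s.1 = slot c t) : Al z :=
  ⟨(0, (t : ZMod 49023)), fun J s hs => by rw [h J s hs]; ext <;> simp [slot]⟩

theorem pushed_slot {z : Conf} {t : ℕ} (h : ∀ c s, z c = some s → s.1 = slot c t) {c s}
    (hs : Pushed z c s) : s.1 = slot c (t+1) := by
  have := Al_pushed (a := (0, (t : ZMod 49023))) (fun J s hs => by rw [h J s hs]; ext <;> simp [slot]) hs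
  rw [this]
  ext <;> simp [slot]

theorem run (hF : Form x) (hA : Al (dec x)) (hC : CF (dec x)) {t : ℕ} (ht : t ≤ 49023) :
    (∀ c s, Phi^[t] x c = some s → s.1 = slot c t) ∧ (∀ c v, al (Phi^[t] x) t c v ↔ (xE x).St t c v) ∧
    (t < 49023 → CF (Phi^[t] x)) := by
  have key : ∀ t < 49023, (∀ c s, Phi^[t] x c = some s → s.1 = slot c t) →
      (∀ c v, al (Phi^[t] x) t c v ↔ (xE x).St t c v) →
      ∀ c s, Pushed (Phi^[t] x) c s ↔ s.1 = slot c (t+1) ∧ (xE x).St (t+1) c s.2 := by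
    intro t ht h1 h2 c s
    have hm : ∀ v, PR (Un t) (Bn t) (al (Phi^[t] x) t) c v ↔ (xE x).St (t+1) c v := by
      intro v
      have : PR (Un t) (Bn t) (al (Phi^[t] x) t) c v ↔ PR (Un t) (Bn t) ((xE x).St t) c v :=
        ⟨PR_mono fun c v => (h2 c v).1, PR_mono fun c v => (h2 c v).2⟩
      rw [this]
      by_cases h15 : t = 7015
      · subst h15
        exact Env.St_mid _ rfl rfl (xE_PB x) c v
      · exact Env.St_step _ (xE_Pl x) h15 c v
    constructor
    · intro hs
      have e := pushed_slot h1 hs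
      refine ⟨e, ?_⟩
      rw [← hm, ← pushed_al ht, ← e]
      exact hs
    · rintro ⟨e, h⟩
      rw [← hm, ← pushed_al ht, ← e] at h
      exact h
  have main : ∀ t ≤ 49023, (∀ c s, Phi^[t] x c = some s → s.1 = slot c t) ∧
      (∀ c v, al (Phi^[t] x) t c v ↔ (xE x).St t c v) := by
    intro t
    induction t with
    | zero =>
      intro _
      exact ⟨fun c s h => (hF c s h).1, S0_al hF⟩
    | succ t ih =>
      intro ht
      obtain ⟨i1, i2⟩ := ih (by omega)
      have k := key t (by omega) i1 i2
      rw [Function.iterate_succ_apply']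
      refine ⟨fun c s h => ((k c s).1 (Phi_eq.1 h).1).1, fun c v => ?_⟩
      unfold al
      rw [Phi_eq, k]
      constructor
      · exact fun h => h.1.2
      · intro h
        refine ⟨⟨rfl, h⟩, fun s' hs' => ?_⟩
        rw [k] at hs'
        exact Prod.ext hs'.1 (St_fun hA hC hs'.2 h)
  refine ⟨(main t ht).1, (main t ht).2, fun ht' c s s' h h' => ?_⟩
  rw [key t ht' (main t ht).1 (main t ht).2] at h h'
  exact Prod.ext (h.1.trans h'.1.symm) (St_fun hA hC h.2 h'.2)

theorem run_end (hF : Form x) (hA : Al (dec x)) (hC : CF (dec x)) :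
    Form (Phi^[49023] x) ∧ dec (Phi^[49023] x) = Phi (dec x) := by
  obtain ⟨h1, h2, _⟩ := run hF hA hC (le_refl 49023)
  have h2' : ∀ c v, al (Phi^[49023] x) 0 c v ↔ (xE x).Sz 41988 c v := by
    intro c v
    rw [← al_U, h2, Env.St_z _ (by omega)]
  constructor
  · intro c s hs
    have e := h1 c s hs
    rw [slotU] at e
    refine ⟨e, ?_⟩
    have : al (Phi^[49023] x) 0 c s.2 := by unfold al; rw [← e]; exact hs
    rw [h2'] at this
    obtain ⟨J, ⟨h, _⟩ | ⟨h, _⟩⟩ := this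
    · exact ⟨J, Or.inl h⟩
    · rw [zz_S] at h; exact ⟨J, Or.inr h⟩
  · funext J
    apply Option.ext
    rintro ⟨p, m⟩
    rw [dec_al, h2', h2', Phi_eq]
    constructor
    · rintro ⟨⟨K, ⟨e, k1⟩ | ⟨e, _⟩⟩, ⟨K', ⟨e', _⟩ | ⟨e', l, k2⟩⟩⟩ <;> (try rw [zz_S] at *) <;> try omega
      obtain rfl : K = J := by omega
      obtain rfl : K' = K := by omega
      obtain ⟨a, hA⟩ := hA
      have := xE_PB_al hA k1
      simp only [Dat.plain.injEq] at this
      have k3 := FM_pushed hA k2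
      rw [← this] at k3
      exact ⟨k3, fun s' hs' => hC _ _ _ hs' k3⟩
    · rintro ⟨hp, _⟩
      obtain ⟨k1, k2⟩ := pushed_FM hp
      exact ⟨⟨J, Or.inl ⟨rfl, k1⟩⟩, ⟨J, Or.inr ⟨by rw [zz_S], k2⟩⟩⟩
end

def enc (y : Conf) : Conf := fun c =>
  if c % 7000 = 0 then (y (c / 7000)).map (fun s => ((0, 0), .plain s.1))
  else if c % 7000 = 7 then (y (c / 7000)).map (fun s => ((7, 0), s.2)) else none

theorem enc_Form (y) : Form (enc y) := by
  intro c s h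
  unfold enc at h
  split_ifs at h with h1 h2
  · have : c = 7000 * (c / 7000) := by omega
    refine ⟨?_, _, Or.inl this⟩
    rw [this, slot0]
    obtain ⟨s', _, rfl⟩ := Option.map_eq_some_iff.1 h
    rfl
  · have : c = 7000 * (c / 7000) + 7 := by omega
    refine ⟨?_, _, Or.inr this⟩
    rw [this, slot7]
    obtain ⟨s', _, rfl⟩ := Option.map_eq_some_iff.1 h
    rfl

theorem dec_enc (y) : dec (enc y) = y := by
  funext J
  apply Option.ext
  intro s
  rw [dec_eq]
  have e1 : enc y (7000 * J) = (y J).map (fun s => ((0, 0), .plain s.1)) := by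
    unfold enc
    rw [if_pos (by omega), show 7000 * J / 7000 = J by omega]
  have e2 : enc y (7000 * J + 7) = (y J).map (fun s => ((7, 0), s.2)) := by
    unfold enc
    rw [if_neg (by omega), if_pos (by omega), show (7000 * J + 7) / 7000 = J by omega]
  rw [e1, e2]
  cases hy : y J with
  | none => simp
  | some s' => simp [Prod.ext_iff]

def Live (T : ℕ) : Prop := ∃ y : Conf, Al y ∧ (∀ t < T, CF (Phi^[t] y)) ∧ Phi^[T] y ≠ fun _ => none

theorem Al_iter {y} (h : Al y) (t : ℕ) : Al (Phi^[t] y) := by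
  induction t with
  | zero => exact h
  | succ t ih => rw [Function.iterate_succ_apply']; exact Al_Phi ih

theorem Live_mul {T} (h : Live T) : Live (49023 * T) := by
  obtain ⟨y, hA, hC, hne⟩ := h
  have main : ∀ t ≤ T, Form (Phi^[49023 * t] (enc y)) ∧ dec (Phi^[49023 * t] (enc y)) = Phi^[t] y := by
    intro t
    induction t with
    | zero => intro _; exact ⟨enc_Form y, dec_enc y⟩
    | succ t ih =>
      intro ht
      obtain ⟨i1, i2⟩ := ih (by omega)
      have := run_end i1 (by rw [i2]; exact Al_iter hA t) (by rw [i2]; exact hC t (by omega))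
      rw [show 49023 * (t+1) = 49023 + 49023 * t by ring, Function.iterate_add_apply]
      rw [Function.iterate_succ_apply' Phi t y, ← i2]
      exact this
  refine ⟨enc y, al_of_slot (t := 0) (fun c s h => (enc_Form y c s h).1), ?_, ?_⟩
  · intro s hs
    obtain ⟨i1, i2⟩ := main (s / 49023) (by omega)
    have := (run i1 (by rw [i2]; exact Al_iter hA _) (by rw [i2]; exact hC _ (by omega)) (t := s % 49023) (by omega)).2.2 (by omega)
    rw [← Function.iterate_add_apply, Nat.mod_add_div] at this
    exact this
  · intro he
    obtain ⟨_, i2⟩ := main T le_rfl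
    apply hne
    rw [← i2, he]
    funext J
    apply Option.ext
    intro s
    rw [dec_eq]
    simp

theorem Live_one : Live 1 := by
  let y : Conf := fun c => if c = 0 then some ((0, 7035), .star) else none
  have hy : ∀ {c s}, y c = some s → c = 0 ∧ s = ((0, 7035), .star) := by
    intro c s h
    simp only [y] at h
    split_ifs at h with h0
    exact ⟨h0, (Option.some.inj h).symm⟩
  have hv : ((0, 7035) : Slot).2.val = 7035 := by
    show ((7035 : ℕ) : ZMod 49023).val = 7035
    exact ZMod.val_cast_of_lt (by norm_num)
  have hUn : ∀ o d u, Un 7035 o d u ↔ u = .id ∧ ((o = 0 ∧ d = 0) ∨ (o = zz 0 ∧ d = zz 1 - zz 0)) := by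
    intro o d u; simp [Un]
  have hz : zz 0 = 7 := by norm_num [zz]
  have hz1 : zz 1 = 8 := by norm_num [zz]
  rw [hz, hz1] at hUn
  have hB : ∀ o, ¬ Bn 7035 o := by intro o; simp [Bn]
  have hP : ∀ {J s}, Pushed y J s → J = 0 ∧ s = ((0, 7036), .star) := by
    rintro J s (⟨l, hl, p, m, hx, hp, hs⟩ | ⟨p, q, m1, m2, h1, h2, ⟨o, h3, _⟩, h4, h5, h6, h7⟩)
    · obtain ⟨e, e'⟩ := hy hx
      cases e'
      rw [phi_eq] at hp
      obtain ⟨o, u, ho, hU, ha⟩ := hp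
      rw [hv, hUn] at hU
      simp only at ho
      rw [show (0 : ZMod 7000) = ((0 : ℤ) : ZMod 7000) by simp] at ho
      obtain ⟨q, hq⟩ := cast_iff.1 ho
      obtain ⟨rfl, ⟨h1, h2⟩ | ⟨h1, h2⟩⟩ := hU
      · refine ⟨by omega, ?_⟩
        simp only [UF.app, Option.some.injEq] at ha
        refine Prod.ext ?_ ha.symm
        rw [hs, h2]
        ext
        · simp [sh]
        · simp only [sh]; rfl
      · omega
    · obtain ⟨e, e'⟩ := hy h1
      cases e'
      rw [hv] at h3
      exact absurd h3 (hB _)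
  refine ⟨y, ⟨(0, 7035), ?_⟩, ?_, ?_⟩
  · intro J s h
    obtain ⟨rfl, rfl⟩ := hy h
    simp
  · intro t ht
    obtain rfl : t = 0 := by omega
    intro J s s' h h'
    rw [(hP h).2, (hP h').2]
  · intro he
    have h0 : Pushed y 0 ((0, 7036), .star) := by
      left
      have e0 : dl 0 = 0 := by simp [dl]
      refine ⟨0, by simp, (0, 7035), .star, by simp [y, e0], ?_, ?_⟩
      · rw [phi_eq, e0]
        refine ⟨0, .id, by simp, ?_, rfl⟩
        rw [hv, hUn]
        simp
      · rw [e0]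
        ext
        · simp [sh]
        · simp only [sh]; rfl
    have : Phi y 0 = some ((0, 7036), .star) := Phi_eq.2 ⟨h0, fun s' hs' => (hP hs').2⟩
    have h2 := congrFun he 0
    simp only [Function.iterate_one] at h2
    rw [this] at h2
    cases h2

theorem Live_pow (k : ℕ) : Live (49023 ^ k) := by
  induction k with
  | zero => exact Live_one
  | succ k ih => rw [pow_succ']; exact Live_mul ih

theorem Phi_blank : Phi (fun _ => none) = fun _ => none := by
  funext c
  apply Option.ext
  intro s
  rw [Phi_eq]
  constructor
  · rintro ⟨⟨l, hl, p, m, hx, _⟩ | ⟨p, q, m1, m2, h1, _⟩, _⟩ <;> simp at *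
  · intro h; cases h

theorem Phi_not_nil (n : ℕ) : ∃ x, Phi^[n] x ≠ fun _ => none := by
  obtain ⟨y, _, _, h⟩ := Live_pow n
  refine ⟨Phi^[49023 ^ n - n] y, ?_⟩
  rw [← Function.iterate_add_apply]
  have : n < 49023 ^ n := Nat.lt_pow_self (by norm_num)
  rwa [show n + (49023 ^ n - n) = 49023 ^ n by omega]

end UE

namespace UE

theorem Dat_finite : Finite Dat := by
  let f : Dat → Option (Option (Slot ⊕ (Fin 7 × Slot) ⊕ (Fin 7 × Slot))) := fun d => match d with
    | .plain p => some (some (Sum.inl p))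
    | .cmp l p => some (some (Sum.inr (Sum.inl (l, p))))
    | .tau l p => some (some (Sum.inr (Sum.inr (l, p))))
    | .keep => none
    | .star => some none
  apply Finite.of_injective f
  intro a b h
  cases a <;> cases b <;> simp [f] at h ⊢ <;> exact h

theorem Cell_equiv : ∃ m : ℕ, Nonempty (Cell ≃ Fin (m+1)) := by
  have := Dat_finite
  obtain ⟨n, ⟨e⟩⟩ := Finite.exists_equiv_fin Cell
  cases n with
  | zero => exact (e none).elim0
  | succ m => exact ⟨m, ⟨e⟩⟩

theorem Phi_shf (a x) : Phi (shf a x) = shf a (Phi x) := by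
  funext c
  apply Option.ext
  intro s
  show _ ↔ Phi x (c + a) = some s
  simp only [Phi_eq, Pushed_shf]

theorem Phi_local {x x' : Conf} {c : ℤ} (h : ∀ i, c - 7 ≤ i → i ≤ c + 7 → x i = x' i) : Phi x c = Phi x' c := by
  have key : ∀ {x x' : Conf}, (∀ i, c - 7 ≤ i → i ≤ c + 7 → x i = x' i) → ∀ s, Pushed x c s → Pushed x' c s := by
    rintro x x' h s (⟨l, hl, p, m, hx, hp⟩ | ⟨p, q, m1, m2, h1, h2, h3⟩)
    · have := dl_bd l
      rw [h _ (by omega) (by omega)] at hx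
      exact Or.inl ⟨l, hl, p, m, hx, hp⟩
    · rw [h _ (by omega) (by omega)] at h1 h2
      exact Or.inr ⟨p, q, m1, m2, h1, h2, h3⟩
  have k : ∀ s, Pushed x c s ↔ Pushed x' c s := fun s =>
    ⟨key h s, key (fun i h1 h2 => (h i h1 h2).symm) s⟩
  apply Option.ext
  intro s
  simp only [Phi_eq, k]

section
variable {m : ℕ} (e : Cell ≃ Fin (m+1))

noncomputable def CA (z : ℤ → Fin (m+1)) : ℤ → Fin (m+1) := fun c => e (Phi (fun i => e.symm (z i)) (c + 14))

theorem CA_iter (n : ℕ) (z : ℤ → Fin (m+1)) (c : ℤ) :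
    (CA e)^[n] z c = e (Phi^[n] (fun i => e.symm (z i)) (c + 14 * n)) := by
  induction n generalizing c with
  | zero => simp
  | succ n ih =>
    rw [Function.iterate_succ_apply', Function.iterate_succ_apply']
    show e (Phi (fun i => e.symm ((CA e)^[n] z i)) (c + 14)) = _
    have : (fun i => e.symm ((CA e)^[n] z i)) = shf (14 * n) (Phi^[n] (fun i => e.symm (z i))) := by
      funext i
      rw [ih]
      simp [shf]
    rw [this, Phi_shf]
    simp only [shf]
    congr 2
    push_cast
    ring

theorem CA_shift (z : ℤ → Fin (m+1)) : CA e (fun i => z (i + 1)) = fun i => CA e z (i + 1) := by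
  funext c
  have := congrFun (Phi_shf 1 (fun i => e.symm (z i))) (c + 14)
  simp only [CA]
  refine (congrArg e this).trans ?_
  simp only [shf]
  congr 2
  ring

theorem CA_quiet : CA e (fun _ => e none) = fun _ => e none := by
  funext c
  simp only [CA, Equiv.symm_apply_apply]
  rw [Phi_blank]

theorem CA_cont : Continuous (CA e) := by
  refine continuous_pi fun c => ?_
  rw [continuous_iff_continuousAt]
  intro z
  apply tendsto_nhds_of_eventually_eq
  have : ∀ i ∈ Finset.Icc (c + 7) (c + 21), ∀ᶠ z' in nhds z, z' i = z i := by
    intro i _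
    have hc : Continuous (fun z' : ℤ → Fin (m+1) => z' i) := continuous_apply i
    exact (hc.tendsto z).eventually (IsOpen.mem_nhds (isOpen_discrete {z i}) rfl)
  have h2 := (Filter.eventually_all_finset _).2 this
  filter_upwards [h2] with z' hz'
  simp only [CA]
  congr 1
  apply Phi_local
  intro i h1 h2
  rw [hz' i (Finset.mem_Icc.2 ⟨by omega, by omega⟩)]

theorem CA_ne (n : ℕ) (z : ℤ → Fin (m+1)) (c : ℤ) :
    (CA e)^[n] z c ≠ e none ↔ Phi^[n] (fun i => e.symm (z i)) (c + 14 * n) ≠ none := by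
  rw [CA_iter]
  simp

theorem CA_not_nil : ¬ ∃ n : ℕ, ∀ z : ℤ → Fin (m+1), (CA e)^[n] z = fun _ => e none := by
  rintro ⟨n, h⟩
  obtain ⟨x, hx⟩ := Phi_not_nil n
  apply hx
  funext c
  by_contra hc
  have := (CA_ne e n (fun i => e (x i)) (c - 14 * n)).2 (by simpa using hc)
  exact this (congrFun (h _) _)

theorem Phi_Ch (x : Conf) : Ch (fun t => Phi^[t] x) :=
  ⟨fun t => by rw [Function.iterate_succ_apply']; exact R_Phi _⟩

theorem CA_space (z : ℤ → Fin (m+1)) (M r : ℕ) :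
    (((Finset.Icc (-(r:ℤ)) r).filter fun i => (CA e)^[4 * 49023 ^ (M+1)] z i ≠ e none).card : ℤ) ≤
      4557 ^ M * (28 * ((2 * r) / 7000 ^ M + 22)) := by
  obtain ⟨n, hn⟩ : ∃ n : ℕ, n = 4 * 49023 ^ (M+1) := ⟨_, rfl⟩
  rw [← hn]
  have hn' : (n : ℤ) = 4 * 49023 ^ (M+1) := by rw [hn]; push_cast; rfl
  have := count_final (Phi_Ch (fun i => e.symm (z i)))
    ⟨1, 0, n, -r + 14 * n, r + 14 * n, n, by norm_num, by norm_num, by norm_num⟩ (n := M)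
    (by simp only; omega) (by simp only; omega) (by simp only; rw [zero_mul, one_mul]; positivity)
    (((Finset.Icc (-(r:ℤ)) r).filter fun i => (CA e)^[n] z i ≠ e none).image fun i => (i + 14 * n, n))
    (by
      intro p hp
      obtain ⟨i, hi, rfl⟩ := Finset.mem_image.1 hp
      obtain ⟨h1, h2⟩ := Finset.mem_filter.1 hi
      rw [Finset.mem_Icc] at h1
      rw [CA_ne] at h2
      exact ⟨h2, by simp, by simp only; omega, by simp only; omega, le_rfl⟩)
  rw [Finset.card_image_of_injective _ (fun a b h => by simpa using h)] at this
  simp only at this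
  rw [show (r:ℤ) + 14 * n - (-r + 14 * n) = 2 * r by ring] at this
  exact this

theorem CA_time (z : ℤ → Fin (m+1)) (M : ℕ) (c : ℤ) :
    (((Finset.range (49023 ^ M)).filter fun i => (CA e)^[4 * 49023 ^ (M+1) + i] z c ≠ e none).card : ℤ) ≤
      4557 ^ M * (28 * ((14 * 49023 ^ M) / 7000 ^ M + 22)) := by
  obtain ⟨n, hn⟩ : ∃ n : ℕ, n = 4 * 49023 ^ (M+1) := ⟨_, rfl⟩
  rw [← hn]
  have hn' : (n : ℤ) = 4 * 49023 ^ (M+1) := by rw [hn]; push_cast; rfl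
  have hL : (0 : ℤ) < 49023 ^ M := by positivity
  have := count_final (Phi_Ch (fun i => e.symm (z i)))
    ⟨14, 1, -c, c + 14 * n, c + 14 * n + 14 * 49023 ^ M, n, by norm_num, by norm_num, by norm_num⟩ (n := M)
    (by simp only; omega) (by simp only; omega) (by simp only; linarith)
    (((Finset.range (49023 ^ M)).filter fun i => (CA e)^[n + i] z c ≠ e none).image
      fun i => (c + 14 * (n + i : ℕ), n + i))
    (by
      intro p hp
      obtain ⟨i, hi, rfl⟩ := Finset.mem_image.1 hp
      obtain ⟨h1, h2⟩ := Finset.mem_filter.1 hi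
      rw [Finset.mem_range] at h1
      have h1' : (i : ℤ) < 49023 ^ M := by exact_mod_cast h1
      rw [CA_ne] at h2
      exact ⟨h2, by simp only; ring, by simp only; push_cast; omega, by simp only; push_cast; omega,
        by simp only; push_cast; omega⟩)
  rw [Finset.card_image_of_injective _ (fun a b h => by simp at h; omega)] at this
  simp only at this
  rw [show c + 14 * n + 14 * 49023 ^ M - (c + 14 * n) = 14 * 49023 ^ M by ring] at this
  exact this

theorem idiv_le (a : ℤ) (M : ℕ) : ((a / 7000 ^ M : ℤ) : ℝ) ≤ a / 7000 ^ M := by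
  rw [le_div_iff₀ (by positivity)]
  have := Int.ediv_mul_le a (b := 7000 ^ M) (by positivity)
  exact_mod_cast this

theorem CA_space' (z : ℤ → Fin (m+1)) (M r : ℕ) :
    (((Finset.Icc (-(r:ℤ)) r).filter fun i => (CA e)^[4 * 49023 ^ (M+1)] z i ≠ e none).card : ℝ) / (2 * r + 1) ≤
      28 * (4557 / 7000) ^ M + (616 * 4557 ^ M) / (2 * r + 1) := by
  have h := CA_space e z M r
  have h' : (((Finset.Icc (-(r:ℤ)) r).filter fun i => (CA e)^[4 * 49023 ^ (M+1)] z i ≠ e none).card : ℝ) ≤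
      4557 ^ M * (28 * (((2 * r) / 7000 ^ M : ℤ) + 22)) := by exact_mod_cast h
  have h2 := idiv_le (2 * r) M
  push_cast at h2
  have hr : (0:ℝ) < 2 * r + 1 := by positivity
  rw [div_le_iff₀ hr, add_mul, div_mul_cancel₀ _ hr.ne']
  refine h'.trans ?_
  have h3 : (4557:ℝ) ^ M * (28 * (((2 * r) / 7000 ^ M : ℤ) + 22)) ≤ 4557 ^ M * (28 * ((2 * r) / 7000 ^ M + 22)) := by
    gcongr
  refine h3.trans ?_
  rw [div_pow]
  have e1 : (4557:ℝ) ^ M * (28 * ((2 * r) / 7000 ^ M + 22)) = 28 * (4557 ^ M / 7000 ^ M) * (2 * r) + 616 * 4557 ^ M := by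
    ring
  rw [e1]
  have : (0:ℝ) ≤ 28 * (4557 ^ M / 7000 ^ M) := by positivity
  nlinarith

theorem CA_time' (z : ℤ → Fin (m+1)) (M : ℕ) (c : ℤ) :
    (((Finset.range (49023 ^ M)).filter fun i => (CA e)^[4 * 49023 ^ (M+1) + i] z c ≠ e none).card : ℝ) ≤
      1008 * (4557 / 7000) ^ M * 49023 ^ M := by
  have h := CA_time e z M c
  have h' : (((Finset.range (49023 ^ M)).filter fun i => (CA e)^[4 * 49023 ^ (M+1) + i] z c ≠ e none).card : ℝ) ≤
      4557 ^ M * (28 * (((14 * 49023 ^ M) / 7000 ^ M : ℤ) + 22)) := by exact_mod_cast h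
  have h2 := idiv_le (14 * 49023 ^ M) M
  push_cast at h2
  refine h'.trans ?_
  have h3 : (4557:ℝ) ^ M * (28 * (((14 * 49023 ^ M) / 7000 ^ M : ℤ) + 22)) ≤
      4557 ^ M * (28 * ((14 * 49023 ^ M) / 7000 ^ M + 22)) := by
    gcongr
  refine h3.trans ?_
  have h4 : (1:ℝ) ≤ 49023 ^ M / 7000 ^ M := by
    rw [one_le_div (by positivity)]
    exact pow_le_pow_left₀ (by norm_num) (by norm_num) M
  have h5 : (0:ℝ) < 4557 ^ M := by positivity
  rw [div_pow]
  have e1 : (4557:ℝ) ^ M * (28 * ((14 * 49023 ^ M) / 7000 ^ M + 22)) =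
    392 * (4557 ^ M * (49023 ^ M / 7000 ^ M)) + 616 * 4557 ^ M := by ring
  have e2 : 1008 * ((4557:ℝ) ^ M / 7000 ^ M) * 49023 ^ M = 1008 * (4557 ^ M * (49023 ^ M / 7000 ^ M)) := by ring
  rw [e1, e2]
  nlinarith

theorem CA_AND (ε : ℝ) (hε : 0 < ε) : ∃ n : ℕ, ∀ z : ℤ → Fin (m+1),
    Filter.limsup (fun r : ℕ =>
      (((Finset.Icc (-(r : ℤ)) (r : ℤ)).filter fun i => (CA e)^[n] z i ≠ (fun _ => e none) i).card : ℝ) /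
        (2 * (r : ℝ) + 1)) Filter.atTop < ε := by
  obtain ⟨M, hM⟩ := exists_pow_lt_of_lt_one (show 0 < ε / 112 by positivity) (show (4557 / 7000 : ℝ) < 1 by norm_num)
  refine ⟨4 * 49023 ^ (M+1), fun z => ?_⟩
  have hlim : Tendsto (fun r : ℕ => (616 * 4557 ^ M : ℝ) / (2 * r + 1)) atTop (nhds 0) := by
    apply Tendsto.const_div_atTop
    apply tendsto_atTop_add_const_right
    exact Tendsto.const_mul_atTop (by norm_num) tendsto_natCast_atTop_atTop
  have hev := hlim.eventually (gt_mem_nhds (show 0 < ε / 4 by positivity))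
  refine lt_of_le_of_lt (Filter.limsup_le_of_le (a := ε / 2) ?_ ?_) (by linarith)
  · refine Filter.IsBoundedUnder.isCoboundedUnder_le ⟨0, ?_⟩
    simp only [eventually_map]
    filter_upwards with r
    show (0:ℝ) ≤ _
    positivity
  · filter_upwards [hev] with r hr
    have := CA_space' e z M r
    linarith

theorem CA_meas_zero (μ : Measure (ℤ → Fin (m+1))) [IsProbabilityMeasure μ] (hμ : MeasurePreserving (CA e) μ μ)
    (c : ℤ) : μ {z | z c ≠ e none} = 0 := by
  classical
  set A : Set (ℤ → Fin (m+1)) := {z | z c ≠ e none} with hA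
  have hAm : MeasurableSet A := by
    have : Measurable (fun z : ℤ → Fin (m+1) => z c) := measurable_pi_apply c
    exact this (MeasurableSet.of_discrete (s := {e none}ᶜ))
  have key : ∀ M : ℕ, μ A ≤ ENNReal.ofReal (1008 * (4557 / 7000) ^ M) := by
    intro M
    have h1 : ∀ i, μ (((CA e)^[4 * 49023 ^ (M+1) + i]) ⁻¹' A) = μ A := fun i =>
      (hμ.iterate _).measure_preimage hAm.nullMeasurableSet
    have h2 : ((49023 ^ M : ℕ) : ENNReal) * μ A =
        ∫⁻ z, ∑ i ∈ Finset.range (49023 ^ M), (((CA e)^[4 * 49023 ^ (M+1) + i]) ⁻¹' A).indicator 1 z ∂μ := by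
      rw [lintegral_finsetSum]
      · rw [Finset.sum_congr rfl (fun i _ => (lintegral_indicator_one ((hμ.iterate _).measurable hAm)).trans (h1 i))]
        simp
      · intro i _
        exact measurable_one.indicator ((hμ.iterate _).measurable hAm)
    have h3 : ((49023 ^ M : ℕ) : ENNReal) * μ A ≤ ENNReal.ofReal (1008 * (4557 / 7000) ^ M * 49023 ^ M) := by
      rw [h2]
      calc _ ≤ ∫⁻ z, ENNReal.ofReal (1008 * (4557 / 7000) ^ M * 49023 ^ M) ∂μ := by
            apply lintegral_mono
            intro z
            have := CA_time' e z M c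
            have e1 : ∑ i ∈ Finset.range (49023 ^ M), (((CA e)^[4 * 49023 ^ (M+1) + i]) ⁻¹' A).indicator (1 : (ℤ → Fin (m+1)) → ENNReal) z =
              (((Finset.range (49023 ^ M)).filter fun i => (CA e)^[4 * 49023 ^ (M+1) + i] z c ≠ e none).card : ENNReal) := by
              rw [Finset.card_filter]
              push_cast
              apply Finset.sum_congr rfl
              intro i _
              simp [Set.indicator_apply, hA]
            simp only
            rw [e1, ← ENNReal.ofReal_natCast]
            exact ENNReal.ofReal_le_ofReal this
        _ = _ := by simp
    rw [ENNReal.ofReal_mul (by positivity), mul_comm] at h3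
    have h4 : ENNReal.ofReal (49023 ^ M) = ((49023 ^ M : ℕ) : ENNReal) := by
      rw [← ENNReal.ofReal_natCast]; push_cast; rfl
    rw [h4] at h3
    refine (ENNReal.mul_le_mul_iff_left ?_ ?_).1 h3
    · positivity
    · exact ENNReal.natCast_ne_top _
  have hl : Tendsto (fun M : ℕ => ENNReal.ofReal (1008 * (4557 / 7000) ^ M)) atTop (nhds 0) := by
    rw [← ENNReal.ofReal_zero]
    apply ENNReal.tendsto_ofReal
    have := (tendsto_pow_atTop_nhds_zero_of_lt_one (show (0:ℝ) ≤ 4557 / 7000 by norm_num) (by norm_num)).const_mul 1008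
    simpa using this
  exact le_antisymm (ge_of_tendsto' hl key) zero_le

theorem CA_UE : ∃! μ : Measure (ℤ → Fin (m + 1)), IsProbabilityMeasure μ ∧
    ∀ A : Set (ℤ → Fin (m + 1)), MeasurableSet A → μ (CA e ⁻¹' A) = μ A := by
  have hm : Measurable (CA e) := (CA_cont e).measurable
  refine ⟨Measure.dirac (fun _ => e none), ⟨inferInstance, fun A hA => ?_⟩, ?_⟩
  · rw [Measure.dirac_apply' _ hA, Measure.dirac_apply' _ (hm hA)]
    have hq := CA_quiet e
    by_cases h : (fun _ => e none) ∈ A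
    · rw [Set.indicator_of_mem h, Set.indicator_of_mem (by rw [Set.mem_preimage, hq]; exact h)]
    · rw [Set.indicator_of_notMem h, Set.indicator_of_notMem (by rw [Set.mem_preimage, hq]; exact h)]
  · rintro μ ⟨hp, hi⟩
    have hμ : MeasurePreserving (CA e) μ μ := ⟨hm, by ext A hA; rw [Measure.map_apply hm hA, hi A hA]⟩
    have hae : ∀ᵐ z ∂μ, z = fun _ => e none := by
      have : ∀ᵐ z ∂μ, ∀ c, z c = e none := by
        rw [ae_all_iff]
        intro c
        exact CA_meas_zero e μ hμ c
      filter_upwards [this] with z hz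
      funext c
      exact hz c
    ext A hA
    rw [Measure.dirac_apply' _ hA]
    by_cases h : (fun _ => e none) ∈ A
    · rw [Set.indicator_of_mem h]
      have : A =ᵐ[μ] Set.univ := by
        filter_upwards [hae] with z hz
        subst hz
        exact propext ⟨fun _ => trivial, fun _ => h⟩
      rw [measure_congr this]
      simp
    · rw [Set.indicator_of_notMem h]
      have : A =ᵐ[μ] (∅ : Set _) := by
        filter_upwards [hae] with z hz
        subst hz
        exact propext ⟨fun h' => absurd h' h, fun h' => h'.elim⟩
      rw [measure_congr this]
      simp
end
end UE

/-- There exists a cellular automaton with a quiescent state which is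
uniquely ergodic and asymptotically nilpotent in density, but not nilpotent. -/
theorem exists_uniquelyErgodic_AND_not_nilpotent_CA :
    ∃ (m : ℕ) (B : Fin (m + 1)) (Φ : (ℤ → Fin (m + 1)) → (ℤ → Fin (m + 1))),
      Continuous Φ ∧
      (∀ x : ℤ → Fin (m + 1), Φ (fun i => x (i + 1)) = fun i => Φ x (i + 1)) ∧
      Φ (fun _ => B) = (fun _ => B) ∧
      (∃! μ : Measure (ℤ → Fin (m + 1)), IsProbabilityMeasure μ ∧
          ∀ A : Set (ℤ → Fin (m + 1)), MeasurableSet A → μ (Φ ⁻¹' A) = μ A) ∧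
      (∀ ε : ℝ, 0 < ε → ∃ n : ℕ, ∀ x : ℤ → Fin (m + 1),
          besicovitchDist (Φ^[n] x) (fun _ => B) < ε) ∧
      ¬ (∃ n : ℕ, ∀ x : ℤ → Fin (m + 1), Φ^[n] x = fun _ => B) := by
  obtain ⟨m, ⟨e⟩⟩ := UE.Cell_equiv
  exact ⟨m, e none, UE.CA e, UE.CA_cont e, UE.CA_shift e, UE.CA_quiet e, UE.CA_UE e,
    fun ε hε => UE.CA_AND e ε hε, UE.CA_not_nil e⟩
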